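/- arXiv:0712.1093 — 2 statements merged into one kernel-verified Lean document; each statement's English description precedes it below -/
import Mathlib

section
/- For every t > 0, every a > 0 and every nonzero real number ν, E[ (A_t^{(ν)} − a)^+ ] = (e^{νt} − 1)/ν − a + e^{ν t/2 − ν² t/2} · a^{2ν+2} · E[ M_t^ν · (a + A_t)^{-(2ν+1)} · exp( 2·M_t/(a + A_t) − 2/a ) ]. -/
open MeasureTheory ProbabilityTheory Real Set

noncomputable section

/-- A standard one-dimensional Brownian motion `B` (with `B 0 = 0`, continuous
paths, Gaussian increments and independent increments) on a probability space
with measure `P`. -/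
structure IsBrownianMotion {Ω : Type*} [MeasurableSpace Ω]
    (P : Measure Ω) (B : ℝ → Ω → ℝ) : Prop where
  isProbabilityMeasure : IsProbabilityMeasure P
  measurable : ∀ t : ℝ, Measurable (B t)
  start : ∀ ω, B 0 ω = 0
  continuous_paths : ∀ ω, Continuous fun t => B t ω
  gaussian_increments : ∀ s t : ℝ, 0 ≤ s → s ≤ t →
    P.map (fun ω => B t ω - B s ω) = gaussianReal 0 (Real.toNNReal (t - s))
  indep_increments : ∀ t : ℕ → ℝ, Monotone t → 0 ≤ t 0 →
    iIndepFun
      (fun (i : ℕ) (ω : Ω) => B (t (i + 1)) ω - B (t i) ω) P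

/-- The exponential martingale `M_t = exp (B_t - t/2)`. -/
def M {Ω : Type*} (B : ℝ → Ω → ℝ) (t : ℝ) (ω : Ω) : ℝ :=
  Real.exp (B t ω - t / 2)

/-- The time integral `A_t = ∫_0^t exp (B_s - s/2) ds`. -/
def A {Ω : Type*} (B : ℝ → Ω → ℝ) (t : ℝ) (ω : Ω) : ℝ :=
  ∫ s in (0 : ℝ)..t, Real.exp (B s ω - s / 2)

/-- The time integral with drift `ν`: `A_t^{(ν)} = ∫_0^t exp (B_s + (ν - 1/2) s) ds`. -/
def Adrift {Ω : Type*} (B : ℝ → Ω → ℝ) (ν t : ℝ) (ω : Ω) : ℝ :=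
  ∫ s in (0 : ℝ)..t, Real.exp (B s ω + (ν - 1 / 2) * s)


namespace EMD

open scoped NNReal ENNReal Topology
open Filter

/-- One-dimensional Gaussian tilting: moment generating function. -/
lemma tilt_complexMGF {Ω : Type*} [MeasurableSpace Ω] {P : Measure Ω} [IsProbabilityMeasure P]
    {X Y : Ω → ℝ} (h : HasGaussianLaw (fun ω => (X ω, Y ω)) P)
    (hX0 : P[X] = 0) (hY0 : P[Y] = 0) :
    complexMGF X (P.tilted Y) Complex.I = complexMGF (fun ω => X ω + cov[X, Y; P]) P Complex.I := by
  have hexp : ∀ {Z : Ω → ℝ}, HasGaussianLaw Z P → P[Z] = 0 →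
      Integrable (fun ω => rexp (Z ω)) P ∧ ∫ ω, rexp (Z ω) ∂P = rexp (Var[Z; P] / 2) := by
    intro Z hZ hZ0
    have h1 := hZ.map_eq_gaussianReal
    have h2 := mgf_gaussianReal h1 1
    have h3 : mgf Z P 1 = ∫ ω, rexp (Z ω) ∂P := by simp [mgf]
    have h4 : ((Var[Z; P]).toNNReal : ℝ) = Var[Z; P] := Real.coe_toNNReal _ (variance_nonneg _ _)
    refine ⟨?_, ?_⟩
    · have : 0 < mgf Z P 1 := by rw [h2]; positivity
      rw [mgf_pos_iff] at this
      simpa using this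
    · rw [← h3, h2, hZ0, h4]; simp
  have hXm := h.fst.memLp_two
  have hYm := h.snd.memLp_two
  have hYe := hexp h.snd hY0
  have hprob : IsProbabilityMeasure (P.tilted Y) := isProbabilityMeasure_tilted hYe.1
  have hmgf : mgf X (P.tilted Y) = mgf (fun ω => X ω + cov[X, Y; P]) P := by
    ext x
    have e1 : mgf X (P.tilted Y) x = rexp (Var[fun ω => x * X ω; P] / 2 + x * cov[X, Y; P]) := by
      rw [mgf, integral_exp_tilted, hYe.2]
      have hg : HasGaussianLaw (fun ω => Y ω + x * X ω) P := by
        have := h.map_fun (ContinuousLinearMap.snd ℝ ℝ ℝ + x • ContinuousLinearMap.fst ℝ ℝ ℝ)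
        simpa using this
      have h0 : P[fun ω => Y ω + x * X ω] = 0 := by
        rw [integral_add (hYm.integrable one_le_two) ((hXm.integrable one_le_two).const_mul x),
          integral_const_mul, hX0, hY0]; simp
      have := (hexp hg h0).2
      simp only [Pi.add_apply]
      rw [this, ← Real.exp_sub]
      congr 1
      rw [variance_fun_add hYm (hXm.const_mul x), covariance_const_mul_right, covariance_comm]
      ring
    have e2 : mgf (fun ω => X ω + cov[X, Y; P]) P x
        = rexp (Var[fun ω => x * X ω; P] / 2 + x * cov[X, Y; P]) := by
      have hg : HasGaussianLaw (fun ω => x * X ω) P := by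
        have := h.map_fun (x • ContinuousLinearMap.fst ℝ ℝ ℝ)
        simpa using this
      have h0 : P[fun ω => x * X ω] = 0 := by
        rw [integral_const_mul, hX0]; simp
      rw [mgf]
      simp only [mul_add, Real.exp_add]
      rw [integral_mul_const, (hexp hg h0).2]
    rw [e1, e2]
  have huniv : integrableExpSet X (P.tilted Y) = Set.univ := by
    ext x
    simp only [integrableExpSet, Set.mem_ofPred_eq, Set.mem_univ, iff_true]
    rw [← mgf_pos_iff, hmgf, mgf_pos_iff]
    have hg : HasGaussianLaw (fun ω => x * X ω) P := by
      have := h.map_fun (x • ContinuousLinearMap.fst ℝ ℝ ℝ)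
      simpa using this
    have h0 : P[fun ω => x * X ω] = 0 := by
      rw [integral_const_mul, hX0]; simp
    simp only [mul_add, Real.exp_add]
    exact (hexp hg h0).1.mul_const _
  exact eqOn_complexMGF_of_mgf hmgf (by simp [huniv])

variable {Ω : Type*} [MeasurableSpace Ω] {P : Measure Ω} {B : ℝ → Ω → ℝ}

lemma preBM (hB : IsBrownianMotion P B) : IsPreBrownianReal (fun u : ℝ≥0 => B u) P := by
  have := hB.isProbabilityMeasure
  refine HasIndepIncrements.isPreBrownianReal_of_hasLaw (fun u => ⟨(hB.measurable _).aemeasurable, ?_⟩)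
    (HasIndepIncrements.of_nat fun t ht _ => ?_)
  · have := hB.gaussian_increments 0 u le_rfl u.2
    simpa [hB.start] using this
  · exact hB.indep_increments (fun i => (t i : ℝ)) (fun i j hij => by exact_mod_cast ht hij) (t 0).2

/-- Cameron-Martin at the level of process laws. -/
lemma cm_law (hB : IsBrownianMotion P B) (κ : ℝ) (s : ℝ≥0) :
    (P.tilted (fun ω => κ * B s ω)).map (fun ω (u : ℝ≥0) => B u ω)
      = P.map (fun ω (u : ℝ≥0) => B u ω + κ * min (u : ℝ) s) := by
  have := hB.isProbabilityMeasure
  have hp := preBM hB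
  have hmeas := hB.measurable
  have hYe : Integrable (fun ω => rexp (κ * B s ω)) P := by
    have := (hp.hasLaw_eval s)
    have h2 := integrable_exp_mul_gaussianReal (μ := 0) (v := s) κ
    rw [← this.map_eq] at h2
    exact h2.comp_measurable (hmeas s)
  have hprob : IsProbabilityMeasure (P.tilted fun ω => κ * B s ω) := isProbabilityMeasure_tilted hYe
  have hm1 : Measurable (fun ω (u : ℝ≥0) => B u ω) := measurable_pi_lambda _ fun u => hmeas u
  have hm2 : Measurable (fun ω (u : ℝ≥0) => B u ω + κ * min (u : ℝ) s) :=
    measurable_pi_lambda _ fun u => (hmeas u).add_const _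
  refine IsProjectiveLimit.unique (P := fun I => P.map (fun ω => I.restrict
      (fun u : ℝ≥0 => B u ω + κ * min (u : ℝ) s))) (fun I => ?_) (fun I => ?_)
  swap
  · rw [Measure.map_map (by fun_prop) hm2]; rfl
  rw [Measure.map_map (by fun_prop) hm1]
  have hI1 : Measurable (I.restrict ∘ fun ω (u : ℝ≥0) => B u ω) :=
    (Finset.measurable_restrict I).comp hm1
  have hI2 : Measurable (fun ω => I.restrict (fun u : ℝ≥0 => B u ω + κ * min (u : ℝ) s)) :=
    (Finset.measurable_restrict I).comp hm2
  have : IsProbabilityMeasure (P.map (fun ω => I.restrict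
      (fun u : ℝ≥0 => B u ω + κ * min (u : ℝ) s))) := Measure.isProbabilityMeasure_map hI2.aemeasurable
  have : IsProbabilityMeasure ((P.tilted fun ω => κ * B s ω).map
    (I.restrict ∘ fun ω (u : ℝ≥0) => B u ω)) := Measure.isProbabilityMeasure_map hI1.aemeasurable
  refine Measure.ext_of_charFunDual (funext fun L => ?_)
  rw [charFunDual_apply, charFunDual_apply, integral_map hI1.aemeasurable (by fun_prop),
    integral_map hI2.aemeasurable (by fun_prop)]
  set X : Ω → ℝ := fun ω => L (I.restrict (fun u : ℝ≥0 => B u ω)) with hX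
  set Y : Ω → ℝ := fun ω => κ * B s ω with hY
  have hLsum : ∀ v : I → ℝ, L v = ∑ i, L (Pi.single i 1) * v i := by
    intro v
    conv_lhs => rw [← Finset.univ_sum_single v]
    rw [map_sum]
    refine Finset.sum_congr rfl fun i _ => ?_
    have : (Pi.single i (v i) : I → ℝ) = v i • Pi.single i (1 : ℝ) := by
      rw [← Pi.single_smul]; simp
    rw [this, map_smul, smul_eq_mul, mul_comm]
  have hmem : ∀ u : ℝ≥0, MemLp (B u) 2 P := fun u =>
    (hp.isGaussianProcess.hasGaussianLaw_eval u).memLp_two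
  have hint : ∀ u : ℝ≥0, ∫ ω, B u ω ∂P = 0 := hp.integral_eval
  have hXs : X = fun ω => ∑ i : I, L (Pi.single i 1) * B (i.1 : ℝ) ω :=
    funext fun ω => hLsum _
  have hX0 : P[X] = 0 := by
    rw [hXs]
    rw [integral_finsetSum _ fun (i : I) _ => ((hmem i.1).integrable one_le_two).const_mul _]
    refine Finset.sum_eq_zero fun i _ => ?_
    rw [integral_const_mul]
    simp [hint]
  have hY0 : P[Y] = 0 := by
    simp only [hY]
    rw [integral_const_mul, hint]; simp
  have hcov : cov[X, Y; P] = L (I.restrict (fun u : ℝ≥0 => κ * min (u : ℝ) s)) := by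
    rw [hXs, hLsum]
    simp only [hY]
    rw [covariance_const_mul_right, covariance_fun_sum_left (fun (i : I) => (hmem i.1).const_mul _) ((hmem s)),
      Finset.mul_sum]
    refine Finset.sum_congr rfl fun i _ => ?_
    rw [covariance_const_mul_left]
    have := hp.covariance_fun_eval i s
    simp only [Finset.restrict]
    rw [this]; push_cast; ring
  have hjoint : HasGaussianLaw (fun ω => (X ω, Y ω)) P := by
    classical
    have h1 := hp.isGaussianProcess.hasGaussianLaw (insert s I)
    let pr : (↥(insert s I) → ℝ) →L[ℝ] (I → ℝ) :=
      ContinuousLinearMap.pi fun i => ContinuousLinearMap.proj (φ := fun _ : (insert s I : Finset ℝ≥0) => ℝ) ⟨i.1, Finset.mem_insert_of_mem i.2⟩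
    let σ : (↥(insert s I) → ℝ) →L[ℝ] ℝ :=
      κ • ContinuousLinearMap.proj (φ := fun _ : (insert s I : Finset ℝ≥0) => ℝ) ⟨s, Finset.mem_insert_self _ _⟩
    exact h1.map_fun ((L.comp pr).prod σ)
  have key := tilt_complexMGF hjoint hX0 hY0
  rw [hcov] at key
  simp only [complexMGF] at key
  calc _ = ∫ ω, Complex.exp (Complex.I * X ω) ∂(P.tilted Y) := by
        refine integral_congr_ae (ae_of_all _ fun ω => ?_)
        simp only [hX, Function.comp_apply]
        rw [mul_comm]
    _ = _ := key
    _ = _ := by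
        refine integral_congr_ae (ae_of_all _ fun ω => ?_)
        simp only [hX]
        rw [← map_add, mul_comm]
        rfl

end EMD

namespace EMD

open scoped NNReal ENNReal Topology
open Filter

/-- Discretised exponential functional of a path. -/
def Adisc (t : ℝ) (n : ℕ) (p : ℝ≥0 → ℝ) : ℝ :=
  ∫ u in (0 : ℝ)..t, rexp (p ((⌊u * n⌋₊ : ℝ≥0) / n) - (⌊u * n⌋₊ / n : ℝ) / 2)

/-- Exponential functional as a measurable functional of the path. -/
def Alim (t : ℝ) (p : ℝ≥0 → ℝ) : ℝ := limsup (fun n => Adisc t n p) atTop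

lemma measurable_Adisc (t : ℝ) (n : ℕ) : Measurable (Adisc t n) := by
  have h1 : Measurable (fun q : (ℝ≥0 → ℝ) × ℕ =>
      rexp (q.1 ((q.2 : ℝ≥0) / n) - (q.2 / n : ℝ) / 2)) := by
    refine measurable_from_prod_countable_left fun k => ?_
    simp only
    fun_prop
  have h2 : Measurable (fun q : (ℝ≥0 → ℝ) × ℝ => (q.1, ⌊q.2 * n⌋₊)) := by
    have : Measurable (fun q : (ℝ≥0 → ℝ) × ℝ => ⌊q.2 * n⌋₊) :=
      Nat.measurable_floor.comp (by fun_prop)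
    exact measurable_fst.prodMk this
  have h3 := (h1.comp h2).stronglyMeasurable
  unfold Adisc
  simp only [intervalIntegral]
  exact (h3.integral_prod_right' (ν := volume.restrict (Ioc 0 t))).measurable.sub
    (h3.integral_prod_right' (ν := volume.restrict (Ioc t 0))).measurable

lemma measurable_Alim (t : ℝ) : Measurable (Alim t) :=
  Measurable.limsup fun n => measurable_Adisc t n

lemma Alim_eq {t : ℝ} (ht : 0 ≤ t) (g : ℝ → ℝ) (hg : Continuous g) :
    Alim t (fun u => g u) = ∫ u in (0 : ℝ)..t, rexp (g u - u / 2) := by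
  refine Tendsto.limsup_eq ?_
  have hG : Continuous (fun u => rexp (g u - u / 2)) := by fun_prop
  obtain ⟨C, hC⟩ := isCompact_Icc.exists_bound_of_continuousOn (s := Icc 0 t) hG.continuousOn
  have hfl : ∀ u : ℝ, 0 ≤ u → ∀ n : ℕ, (⌊u * n⌋₊ / n : ℝ) ∈ Icc 0 u := by
    intro u hu n
    refine ⟨by positivity, ?_⟩
    rcases Nat.eq_zero_or_pos n with rfl | hn
    · simpa using hu
    · have : (0 : ℝ) < n := by exact_mod_cast hn
      rw [div_le_iff₀ this]
      exact Nat.floor_le (by positivity)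
  have e : ∀ n, Adisc t n (fun u => g u)
      = ∫ u in (0 : ℝ)..t, (fun u => rexp (g u - u / 2)) (⌊u * n⌋₊ / n : ℝ) := by
    intro n; simp [Adisc]
  simp_rw [e]
  refine intervalIntegral.tendsto_integral_filter_of_dominated_convergence (fun _ => C) ?_ ?_ ?_ ?_
  · refine Eventually.of_forall fun n => Measurable.aestronglyMeasurable ?_
    have : Measurable (fun u : ℝ => ⌊u * n⌋₊) := Nat.measurable_floor.comp (by fun_prop)
    have h2 : Measurable (fun u : ℝ => (⌊u * n⌋₊ / n : ℝ)) :=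
      (measurable_from_nat (f := fun k : ℕ => (k / n : ℝ))).comp this
    exact hG.measurable.comp h2
  · refine Eventually.of_forall fun n => ae_of_all _ fun u hu => ?_
    rw [uIoc_of_le ht] at hu
    have := hfl u hu.1.le n
    exact hC _ ⟨this.1, this.2.trans hu.2⟩
  · simp
  · refine ae_of_all _ fun u hu => ?_
    rw [uIoc_of_le ht] at hu
    refine (hG.tendsto u).comp ?_
    exact (tendsto_nat_floor_mul_div_atTop hu.1.le).comp tendsto_natCast_atTop_atTop

variable {Ω : Type*} [MeasurableSpace Ω] {P : Measure Ω} {B : ℝ → Ω → ℝ}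

lemma exp_moment (hB : IsBrownianMotion P B) (κ : ℝ) {s : ℝ} (hs : 0 ≤ s) :
    Integrable (fun ω => rexp (κ * B s ω)) P ∧ ∫ ω, rexp (κ * B s ω) ∂P = rexp (κ ^ 2 * s / 2) := by
  have h := hB.gaussian_increments 0 s le_rfl hs
  simp only [hB.start, sub_zero] at h
  have h2 := mgf_gaussianReal h κ
  refine ⟨?_, ?_⟩
  · have h2 := integrable_exp_mul_gaussianReal (μ := 0) (v := s.toNNReal) κ
    rw [← h] at h2
    exact h2.comp_measurable (hB.measurable s)
  · rw [mgf] at h2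
    rw [h2, Real.coe_toNNReal _ hs]; congr 1; ring

/-- Cameron-Martin formula for the functionals we need. -/
lemma cm (hB : IsBrownianMotion P B) (κ : ℝ) {s t : ℝ} (hs : 0 ≤ s) (ht : 0 ≤ t)
    {Φ : ℝ × ℝ × ℝ → ℝ} (hΦ : Measurable Φ) :
    ∫ ω, rexp (κ * B s ω - κ ^ 2 * s / 2) * Φ (B t ω, A B t ω, A B s ω) ∂P
      = ∫ ω, Φ (B t ω + κ * min t s, ∫ u in (0 : ℝ)..t, rexp (B u ω + κ * min u s - u / 2),
          ∫ u in (0 : ℝ)..s, rexp (B u ω + κ * min u s - u / 2)) ∂P := by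
  have := hB.isProbabilityMeasure
  have hmeas := hB.measurable
  have hlaw : (P.tilted (fun ω => κ * B s ω)).map (fun ω (u : ℝ≥0) => B u ω)
      = P.map (fun ω (u : ℝ≥0) => B u ω + κ * min (u : ℝ) s) := cm_law hB κ ⟨s, hs⟩
  have hm1 : Measurable (fun ω (u : ℝ≥0) => B u ω) := measurable_pi_lambda _ fun u => hmeas u
  have hm2 : Measurable (fun ω (u : ℝ≥0) => B u ω + κ * min (u : ℝ) s) :=
    measurable_pi_lambda _ fun u => (hmeas u).add_const _
  let Ψ : (ℝ≥0 → ℝ) → ℝ := fun p => Φ (p ⟨t, ht⟩, Alim t p, Alim s p)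
  have hΨ : Measurable Ψ := hΦ.comp
    ((measurable_pi_apply _).prodMk ((measurable_Alim t).prodMk (measurable_Alim s)))
  have key : ∫ p, Ψ p ∂((P.tilted (fun ω => κ * B s ω)).map (fun ω (u : ℝ≥0) => B u ω))
      = ∫ p, Ψ p ∂(P.map (fun ω (u : ℝ≥0) => B u ω + κ * min (u : ℝ) s)) := by rw [hlaw]
  rw [integral_map hm1.aemeasurable hΨ.aestronglyMeasurable,
    integral_map hm2.aemeasurable hΨ.aestronglyMeasurable, integral_tilted,
    (exp_moment hB κ hs).2] at key
  refine Eq.trans (integral_congr_ae (ae_of_all _ fun ω => ?_)) (key.trans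
    (integral_congr_ae (ae_of_all _ fun ω => ?_)))
  · simp only [Ψ, smul_eq_mul, ← Real.exp_sub, A]
    rw [Alim_eq ht (fun u => B u ω) (hB.continuous_paths ω),
      Alim_eq hs (fun u => B u ω) (hB.continuous_paths ω)]
    rfl
  · simp only [Ψ]
    have hc : Continuous (fun u => B u ω + κ * min u s) :=
      (hB.continuous_paths ω).add (by fun_prop)
    rw [Alim_eq ht (fun u => B u ω + κ * min u s) hc, Alim_eq hs (fun u => B u ω + κ * min u s) hc]
    rfl

end EMD

namespace EMD

open scoped NNReal ENNReal Topology
open Filter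

variable {Ω : Type*} [MeasurableSpace Ω] {P : Measure Ω} {B : ℝ → Ω → ℝ}

lemma measurable_B_uncurry (hB : IsBrownianMotion P B) :
    Measurable (fun q : ℝ × Ω => B q.1 q.2) :=
  measurable_uncurry_of_continuous_of_measurable hB.continuous_paths hB.measurable

lemma measurable_interval {g : ℝ × Ω → ℝ} (hg : Measurable g) (a b : ℝ) :
    Measurable (fun ω => ∫ u in a..b, g (u, ω)) := by
  have h3 := hg.stronglyMeasurable
  simp only [intervalIntegral]
  exact (h3.integral_prod_left' (μ := volume.restrict (Ioc a b))).measurable.sub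
    (h3.integral_prod_left' (μ := volume.restrict (Ioc b a))).measurable

/-- the auxiliary integral with arbitrary drift -/
def Aux (B : ℝ → Ω → ℝ) (κ s : ℝ) (ω : Ω) : ℝ := ∫ u in (0 : ℝ)..s, rexp (B u ω + κ * u)

lemma measurable_Aux (hB : IsBrownianMotion P B) (κ s : ℝ) : Measurable (Aux B κ s) := by
  have := measurable_B_uncurry hB
  exact measurable_interval (g := fun q => rexp (B q.1 q.2 + κ * q.1)) (by fun_prop) 0 s

lemma cont_exp (hB : IsBrownianMotion P B) (κ : ℝ) (ω : Ω) :
    Continuous (fun u => rexp (B u ω + κ * u)) := by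
  have := hB.continuous_paths ω
  fun_prop

lemma hasDerivAt_Aux (hB : IsBrownianMotion P B) (κ s : ℝ) (ω : Ω) :
    HasDerivAt (fun s => Aux B κ s ω) (rexp (B s ω + κ * s)) s :=
  intervalIntegral.integral_hasDerivAt_right ((cont_exp hB κ ω).intervalIntegrable _ _)
    ((cont_exp hB κ ω).stronglyMeasurableAtFilter _ _) (cont_exp hB κ ω).continuousAt

lemma cont_Aux (hB : IsBrownianMotion P B) (κ : ℝ) (ω : Ω) : Continuous (fun s => Aux B κ s ω) :=
  continuous_iff_continuousAt.2 fun s => (hasDerivAt_Aux hB κ s ω).continuousAt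

lemma measurable_Aux_uncurry (hB : IsBrownianMotion P B) (κ : ℝ) :
    Measurable (fun q : ℝ × Ω => Aux B κ q.1 q.2) :=
  measurable_uncurry_of_continuous_of_measurable (cont_Aux hB κ) (measurable_Aux hB κ)

lemma Aux_nonneg {κ s : ℝ} (hs : 0 ≤ s) (ω : Ω) : 0 ≤ Aux B κ s ω :=
  intervalIntegral.integral_nonneg hs fun _ _ => (Real.exp_pos _).le

lemma Aux_pos (hB : IsBrownianMotion P B) {κ s : ℝ} (hs : 0 < s) (ω : Ω) : 0 < Aux B κ s ω :=
  intervalIntegral.intervalIntegral_pos_of_pos ((cont_exp hB κ ω).intervalIntegrable _ _)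
    (fun _ => Real.exp_pos _) hs

lemma Aux_mono (hB : IsBrownianMotion P B) {κ s t : ℝ} (hst : s ≤ t) (ω : Ω) :
    Aux B κ s ω ≤ Aux B κ t ω := by
  have h : Aux B κ t ω - Aux B κ s ω = ∫ u in s..t, rexp (B u ω + κ * u) :=
    intervalIntegral.integral_interval_sub_left ((cont_exp hB κ ω).intervalIntegrable _ _)
      ((cont_exp hB κ ω).intervalIntegrable _ _)
  have : 0 ≤ ∫ u in s..t, rexp (B u ω + κ * u) :=
    intervalIntegral.integral_nonneg hst fun _ _ => (Real.exp_pos _).le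
  linarith

lemma A_eq_Aux (t : ℝ) (ω : Ω) : A B t ω = Aux B (-1/2) t ω := by
  unfold A Aux
  congr 1; ext u; congr 1; ring

lemma Adrift_eq_Aux (ν t : ℝ) (ω : Ω) : Adrift B ν t ω = Aux B (ν - 1/2) t ω := rfl

/-- integrability of the drifted exponential on the product space, with its time-marginals -/
lemma integrable_prod_exp (hB : IsBrownianMotion P B) (κ t : ℝ) :
    Integrable (fun q : ℝ × Ω => rexp (B q.1 q.2 + κ * q.1)) ((volume.restrict (Ioc 0 t)).prod P) := by
  have := hB.isProbabilityMeasure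
  have hm := measurable_B_uncurry hB
  have hval : ∀ s : ℝ, 0 ≤ s → ∫ ω, rexp (B s ω + κ * s) ∂P = rexp (s / 2 + κ * s) := by
    intro s hs
    have := (exp_moment hB 1 hs).2
    simp only [Real.exp_add, integral_mul_const]
    simp only [one_mul] at this
    rw [this]; congr 2; ring
  refine (integrable_prod_iff (Measurable.aestronglyMeasurable (by fun_prop))).2 ⟨?_, ?_⟩
  · refine (ae_restrict_mem measurableSet_Ioc).mono fun s hs => ?_
    have := (exp_moment hB 1 hs.1.le).1
    simp only [one_mul] at this
    simp only [Real.exp_add]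
    exact this.mul_const _
  · have h1 : Integrable (fun s : ℝ => rexp (s / 2 + κ * s)) (volume.restrict (Ioc 0 t)) :=
      (Continuous.integrableOn_Ioc (by fun_prop))
    refine h1.congr ?_
    refine (ae_restrict_mem measurableSet_Ioc).mono fun s hs => ?_
    simp only [Real.norm_eq_abs, abs_of_pos (Real.exp_pos _)]
    exact (hval s hs.1.le).symm

lemma integral_exp_drift (hB : IsBrownianMotion P B) (ν : ℝ) {s : ℝ} (hs : 0 ≤ s) :
    ∫ ω, rexp (B s ω + (ν - 1/2) * s) ∂P = rexp (ν * s) := by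
  have := (exp_moment hB 1 hs).2
  simp only [Real.exp_add, integral_mul_const]
  simp only [one_mul] at this
  rw [this, ← Real.exp_add]; congr 1; ring

lemma Adrift_mean (hB : IsBrownianMotion P B) {ν t : ℝ} (hν : ν ≠ 0) (ht : 0 ≤ t) :
    Integrable (Adrift B ν t) P ∧ ∫ ω, Adrift B ν t ω ∂P = (rexp (ν * t) - 1) / ν := by
  have := hB.isProbabilityMeasure
  have h := integrable_prod_exp hB (ν - 1/2) t
  have e : Adrift B ν t = fun ω => ∫ s in Ioc 0 t, rexp (B s ω + (ν - 1/2) * s) := by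
    ext ω; rw [Adrift, intervalIntegral.integral_of_le ht]
  refine ⟨?_, ?_⟩
  · rw [e]; exact h.integral_prod_right
  · rw [e]
    rw [← integral_integral_swap (f := fun s ω => rexp (B s ω + (ν - 1/2) * s)) h]
    rw [← intervalIntegral.integral_of_le ht]
    rw [intervalIntegral.integral_congr (g := fun s => rexp (ν * s))]
    · rw [intervalIntegral.integral_comp_mul_left (fun x => rexp x) hν]
      simp [integral_exp]; field_simp
    · intro s hs
      rw [uIcc_of_le ht] at hs
      exact integral_exp_drift hB ν hs.1

lemma shifted_split (hB : IsBrownianMotion P B) {s t : ℝ} (hs : 0 ≤ s) (hst : s ≤ t) (ω : Ω) :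
    ∫ u in (0 : ℝ)..t, rexp (B u ω + 1 * min u s - u / 2)
      = Aux B (1/2) s ω + rexp s * (Aux B (-1/2) t ω - Aux B (-1/2) s ω) := by
  have hc : Continuous (fun u => rexp (B u ω + 1 * min u s - u / 2)) := by
    have := hB.continuous_paths ω
    fun_prop
  rw [← intervalIntegral.integral_add_adjacent_intervals (hc.intervalIntegrable 0 s)
    (hc.intervalIntegrable s t)]
  congr 1
  · unfold Aux
    refine intervalIntegral.integral_congr fun u hu => ?_
    rw [uIcc_of_le hs] at hu
    simp only [min_eq_left hu.2]; congr 1; ring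
  · have h : Aux B (-1/2) t ω - Aux B (-1/2) s ω = ∫ u in s..t, rexp (B u ω + (-1/2) * u) :=
      intervalIntegral.integral_interval_sub_left ((cont_exp hB _ ω).intervalIntegrable _ _)
        ((cont_exp hB _ ω).intervalIntegrable _ _)
    rw [h, ← intervalIntegral.integral_const_mul]
    refine intervalIntegral.integral_congr fun u hu => ?_
    rw [uIcc_of_le hst] at hu
    simp only [min_eq_right hu.1, ← Real.exp_add]; congr 1; ring

end EMD

namespace EMD

open scoped NNReal ENNReal Topology
open Filter

variable {Ω : Type*} [MeasurableSpace Ω] {P : Measure Ω} {B : ℝ → Ω → ℝ}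

/-- the terminal pair `(B_t - t/2, A_t)` -/
def Pair (B : ℝ → Ω → ℝ) (t : ℝ) (ω : Ω) : ℝ × ℝ := (B t ω - t / 2, A B t ω)

lemma measurable_A (hB : IsBrownianMotion P B) (t : ℝ) : Measurable (A B t) := by
  have : A B t = Aux B (-1/2) t := funext fun ω => A_eq_Aux t ω
  rw [this]; exact measurable_Aux hB _ t

lemma A_pos (hB : IsBrownianMotion P B) {t : ℝ} (ht : 0 < t) (ω : Ω) : 0 < A B t ω := by
  rw [A_eq_Aux]; exact Aux_pos hB ht ω

lemma measurable_Pair (hB : IsBrownianMotion P B) (t : ℝ) : Measurable (Pair B t) :=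
  ((hB.measurable t).sub_const _).prodMk (measurable_A hB t)

/-- Integration by parts: first half, the flow derivative. -/
lemma ibp_path (hB : IsBrownianMotion P B) {t C : ℝ} (ht : 0 < t) {f fb fA : ℝ × ℝ → ℝ}
    (hfb : Measurable fb) (hfA : Measurable fA)
    (hd : ∀ p : ℝ × ℝ, 0 < p.2 → HasFDerivAt f
      (fb p • ContinuousLinearMap.fst ℝ ℝ ℝ + fA p • ContinuousLinearMap.snd ℝ ℝ ℝ) p)
    (b2 : ∀ p : ℝ × ℝ, 0 < p.2 → |fb p| ≤ C)
    (b3 : ∀ p : ℝ × ℝ, 0 < p.2 → |p.2 * fA p| ≤ C) (γ : ℝ → Ω → ℝ × ℝ)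
    (hγ : ∀ s ω, γ s ω = (B t ω - t / 2 + s,
      Aux B (1/2) s ω + rexp s * (Aux B (-1/2) t ω - Aux B (-1/2) s ω))) :
    (∀ s ω, s ∈ Icc 0 t → 0 < (γ s ω).2) ∧
    (∀ s ω, s ∈ Icc 0 t → |fb (γ s ω) + fA (γ s ω) * ((γ s ω).2 - Aux B (1/2) s ω)| ≤ 2 * C) ∧
    (Measurable (fun q : ℝ × Ω => fb (γ q.1 q.2) + fA (γ q.1 q.2) * ((γ q.1 q.2).2 - Aux B (1/2) q.1 q.2))) ∧
    (∀ ω, f (γ t ω) - f (γ 0 ω)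
      = ∫ s in (0 : ℝ)..t, (fb (γ s ω) + fA (γ s ω) * ((γ s ω).2 - Aux B (1/2) s ω))) := by
  have hmB := measurable_B_uncurry hB
  have hc := measurable_Aux_uncurry hB (1/2)
  have hdd := measurable_Aux_uncurry hB (-1/2)
  have hdt := (measurable_Aux hB (-1/2) t)
  have hmγ : Measurable (fun q : ℝ × Ω => γ q.1 q.2) := by
    simp only [hγ]
    have := hB.measurable t
    fun_prop
  have hpos : ∀ s ω, s ∈ Icc 0 t → 0 < (γ s ω).2 := by
    intro s ω hs
    rw [hγ]
    simp only
    have h1 := Aux_mono hB (κ := -1/2) hs.2 ω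
    rcases hs.1.eq_or_lt with h0 | h0
    · subst h0
      have := Aux_pos hB (κ := -1/2) ht ω
      simp [Aux] at this ⊢
      exact this
    · have := Aux_pos hB (κ := 1/2) h0 ω
      have := mul_nonneg (Real.exp_pos s).le (sub_nonneg.2 h1)
      linarith
  have hbd : ∀ s ω, s ∈ Icc 0 t →
      |fb (γ s ω) + fA (γ s ω) * ((γ s ω).2 - Aux B (1/2) s ω)| ≤ 2 * C := by
    intro s ω hs
    have h0 := hpos s ω hs
    have h1 := Aux_mono hB (κ := -1/2) hs.2 ω
    have h2 := Aux_nonneg (B := B) (κ := 1/2) hs.1 ω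
    have h3 : |fA (γ s ω) * ((γ s ω).2 - Aux B (1/2) s ω)| ≤ |(γ s ω).2 * fA (γ s ω)| := by
      rw [abs_mul, abs_mul, mul_comm]
      refine mul_le_mul_of_nonneg_right ?_ (abs_nonneg _)
      have : 0 ≤ (γ s ω).2 - Aux B (1/2) s ω := by
        rw [hγ]; simp only
        have := mul_nonneg (Real.exp_pos s).le (sub_nonneg.2 h1)
        linarith
      rw [abs_of_nonneg this, abs_of_pos h0]
      linarith
    have := abs_add_le (fb (γ s ω)) (fA (γ s ω) * ((γ s ω).2 - Aux B (1/2) s ω))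
    have := b2 _ h0
    have := b3 _ h0
    linarith
  have hmD : Measurable (fun q : ℝ × Ω =>
      fb (γ q.1 q.2) + fA (γ q.1 q.2) * ((γ q.1 q.2).2 - Aux B (1/2) q.1 q.2)) :=
    (hfb.comp hmγ).add ((hfA.comp hmγ).mul ((measurable_snd.comp hmγ).sub hc))
  refine ⟨hpos, hbd, hmD, ?_⟩
  intro ω
  symm
  refine intervalIntegral.integral_eq_sub_of_hasDerivAt (f := fun s => f (γ s ω)) ?_ ?_
  · intro s hs
    rw [uIcc_of_le ht.le] at hs
    have h1 : HasDerivAt (fun s => γ s ω) ((1 : ℝ), (γ s ω).2 - Aux B (1/2) s ω) s := by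
      have e : (fun s => γ s ω) = fun s => (B t ω - t / 2 + s,
        Aux B (1/2) s ω + rexp s * (Aux B (-1/2) t ω - Aux B (-1/2) s ω)) := funext fun s => hγ s ω
      rw [e, hγ]
      refine HasDerivAt.prodMk ((hasDerivAt_id s).const_add _) ?_
      refine ((hasDerivAt_Aux hB (1/2) s ω).add ((Real.hasDerivAt_exp s).mul
        ((hasDerivAt_Aux hB (-1/2) s ω).const_sub _))).congr_deriv ?_
      have : rexp (B s ω + 1/2 * s) = rexp s * rexp (B s ω + -1/2 * s) := by
        rw [← Real.exp_add]; congr 1; ring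
      rw [this]; ring
    have h2 := (hd _ (hpos s ω hs)).comp_hasDerivAt s h1
    refine h2.congr_deriv ?_
    simp
  · rw [intervalIntegrable_iff_integrableOn_Ioc_of_le ht.le]
    refine Integrable.mono' (g := fun _ => 2 * C) (integrable_const _) ?_ ?_
    · exact (hmD.comp (measurable_id.prodMk measurable_const)).aestronglyMeasurable
    · refine (ae_restrict_mem measurableSet_Ioc).mono fun s hs => ?_
      exact hbd s ω ⟨hs.1.le, hs.2⟩

lemma path_int (hB : IsBrownianMotion P B) {t : ℝ} (ω : Ω) (x y : ℝ) :
    ∫ s in (0 : ℝ)..t, rexp (B s ω + -1/2 * s) * (x + y * (A B t ω - A B s ω))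
      = A B t ω * x + A B t ω ^ 2 / 2 * y := by
  simp only [A_eq_Aux]
  have h := fun s => hasDerivAt_Aux hB (-1/2) s ω
  have hc := cont_Aux hB (-1/2) ω
  have he := cont_exp hB (-1/2) ω
  rw [intervalIntegral.integral_eq_sub_of_hasDerivAt
    (f := fun s => Aux B (-1/2) s ω * x - (Aux B (-1/2) t ω - Aux B (-1/2) s ω) ^ 2 / 2 * y)]
  · have : Aux B (-1/2) 0 ω = 0 := by simp [Aux]
    simp only [this]; ring
  · intro s _
    refine (((h s).mul_const x).sub ((((h s).const_sub _).pow 2).div_const 2 |>.mul_const y)).congr_deriv ?_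
    push_cast; ring
  · refine Continuous.intervalIntegrable ?_ _ _
    fun_prop

/-- Integration by parts. -/
lemma ibp (hB : IsBrownianMotion P B) {t C : ℝ} (ht : 0 < t) {f fb fA : ℝ × ℝ → ℝ}
    (hf : Measurable f) (hfb : Measurable fb) (hfA : Measurable fA)
    (hd : ∀ p : ℝ × ℝ, 0 < p.2 → HasFDerivAt f
      (fb p • ContinuousLinearMap.fst ℝ ℝ ℝ + fA p • ContinuousLinearMap.snd ℝ ℝ ℝ) p)
    (b1 : ∀ p : ℝ × ℝ, 0 < p.2 → |f p| ≤ C) (b2 : ∀ p : ℝ × ℝ, 0 < p.2 → |fb p| ≤ C)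
    (b3 : ∀ p : ℝ × ℝ, 0 < p.2 → |p.2 * fA p| ≤ C) :
    ∫ ω, (A B t ω * fb (Pair B t ω) + A B t ω ^ 2 / 2 * fA (Pair B t ω)
      - (M B t ω - 1) * f (Pair B t ω)) ∂P = 0 := by
  have := hB.isProbabilityMeasure
  let γ : ℝ → Ω → ℝ × ℝ := fun s ω => (B t ω - t / 2 + s,
      Aux B (1/2) s ω + rexp s * (Aux B (-1/2) t ω - Aux B (-1/2) s ω))
  obtain ⟨hpos, hbd, hmD, hftc⟩ := ibp_path hB ht hfb hfA hd b2 b3 γ (fun _ _ => rfl)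
  have hmP := measurable_Pair hB t
  have hmA := measurable_A hB t
  have hmAu := measurable_Aux_uncurry hB (-1/2)
  have hmB := measurable_B_uncurry hB
  have hγm : ∀ s, Measurable (γ s) := by
    intro s
    have h1 := hB.measurable t
    have h2 := measurable_Aux hB (1/2) s
    have h3 := measurable_Aux hB (-1/2) s
    have h4 := measurable_Aux hB (-1/2) t
    simp only [γ]
    fun_prop
  -- integrability of the two integrands
  have hI1 : Integrable (fun q : ℝ × Ω =>
      fb (γ q.1 q.2) + fA (γ q.1 q.2) * ((γ q.1 q.2).2 - Aux B (1/2) q.1 q.2))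
      ((volume.restrict (Ioc 0 t)).prod P) := by
    refine Integrable.mono' (g := fun _ => 2 * C) (integrable_const _) hmD.aestronglyMeasurable ?_
    have : ∀ᵐ q ∂((volume.restrict (Ioc 0 t)).prod P), q.1 ∈ Ioc 0 t :=
      Measure.quasiMeasurePreserving_fst.ae (ae_restrict_mem measurableSet_Ioc)
    exact this.mono fun q hq => hbd q.1 q.2 ⟨hq.1.le, hq.2⟩
  have hI2 : Integrable (fun q : ℝ × Ω => rexp (B q.1 q.2 + -1/2 * q.1) *
      (fb (Pair B t q.2) + fA (Pair B t q.2) * (A B t q.2 - A B q.1 q.2)))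
      ((volume.restrict (Ioc 0 t)).prod P) := by
    refine Integrable.mono' (g := fun q => rexp (B q.1 q.2 + -1/2 * q.1) * (2 * C))
      ((integrable_prod_exp hB (-1/2) t).mul_const _) ?_ ?_
    · refine Measurable.aestronglyMeasurable ?_
      have e : (fun q : ℝ × Ω => A B q.1 q.2) = fun q => Aux B (-1/2) q.1 q.2 := by
        ext q; exact A_eq_Aux _ _
      have : Measurable (fun q : ℝ × Ω => A B q.1 q.2) := by rw [e]; exact hmAu
      have hsn : Measurable (Prod.snd : ℝ × Ω → Ω) := measurable_snd
      have h5 := (hfb.comp hmP).comp hsn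
      have h6 := (hfA.comp hmP).comp hsn
      have h7 := hmA.comp hsn
      exact (Measurable.exp (by fun_prop)).mul (h5.add (h6.mul (h7.sub this)))
    · have : ∀ᵐ q ∂((volume.restrict (Ioc 0 t)).prod P), q.1 ∈ Ioc 0 t :=
        Measure.quasiMeasurePreserving_fst.ae (ae_restrict_mem measurableSet_Ioc)
      refine this.mono fun q hq => ?_
      rw [norm_mul, Real.norm_eq_abs, abs_of_pos (Real.exp_pos _)]
      refine mul_le_mul_of_nonneg_left ?_ (Real.exp_pos _).le
      have h0 : 0 < (Pair B t q.2).2 := A_pos hB ht q.2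
      have h1 := Aux_mono hB (κ := -1/2) hq.2 q.2
      have h2 := Aux_nonneg (B := B) (κ := -1/2) hq.1.le q.2
      rw [← A_eq_Aux, ← A_eq_Aux] at h1
      rw [← A_eq_Aux] at h2
      have h3 : |fA (Pair B t q.2) * (A B t q.2 - A B q.1 q.2)|
          ≤ |(Pair B t q.2).2 * fA (Pair B t q.2)| := by
        rw [abs_mul, abs_mul, mul_comm]
        refine mul_le_mul_of_nonneg_right ?_ (abs_nonneg _)
        rw [abs_of_nonneg (sub_nonneg.2 h1), abs_of_pos h0]
        simp only [Pair]; linarith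
      have := abs_add_le (fb (Pair B t q.2)) (fA (Pair B t q.2) * (A B t q.2 - A B q.1 q.2))
      have := b2 _ h0
      have := b3 _ h0
      rw [Real.norm_eq_abs]
      linarith
  -- slices agree by Cameron-Martin
  have hslice : ∀ s ∈ Ioc 0 t,
      ∫ ω, (fb (γ s ω) + fA (γ s ω) * ((γ s ω).2 - Aux B (1/2) s ω)) ∂P
      = ∫ ω, rexp (B s ω + -1/2 * s) *
        (fb (Pair B t ω) + fA (Pair B t ω) * (A B t ω - A B s ω)) ∂P := by
    intro s hs
    have hΦ : Measurable (fun x : ℝ × ℝ × ℝ => fb (x.1 - t / 2, x.2.1) +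
        fA (x.1 - t / 2, x.2.1) * (x.2.1 - x.2.2)) := by fun_prop
    have := cm hB 1 hs.1.le ht.le hΦ
    simp only [shifted_split hB hs.1.le hs.2, shifted_split hB hs.1.le le_rfl, sub_self, mul_zero,
      add_zero, min_eq_right hs.2] at this
    refine Eq.trans (integral_congr_ae (ae_of_all _ fun ω => ?_)) (this.symm.trans
      (integral_congr_ae (ae_of_all _ fun ω => ?_)))
    · simp only [γ]
      have e : B t ω - t / 2 + s = B t ω + 1 * s - t / 2 := by ring
      rw [e]
    · simp only [Pair]
      congr 2; ring
  have hbf : ∀ s ∈ Icc 0 t, Integrable (fun ω => f (γ s ω)) P := by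
    intro s hs
    refine Integrable.mono' (g := fun _ => C) (integrable_const _)
      (hf.comp (hγm s)).aestronglyMeasurable (ae_of_all _ fun ω => ?_)
    exact b1 _ (hpos s ω hs)
  have hγ0 : ∀ ω, γ 0 ω = Pair B t ω := by
    intro ω; simp [γ, Pair, A_eq_Aux, Aux]
  -- chain
  have key : ∫ ω, f (γ t ω) ∂P - ∫ ω, f (Pair B t ω) ∂P
      = ∫ ω, (A B t ω * fb (Pair B t ω) + A B t ω ^ 2 / 2 * fA (Pair B t ω)) ∂P := by
    have e0 := hbf 0 ⟨le_rfl, ht.le⟩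
    simp only [hγ0] at e0
    rw [← integral_sub (hbf t ⟨ht.le, le_rfl⟩) e0]
    have e1 : ∀ ω, f (γ t ω) - f (Pair B t ω) = ∫ s in Ioc 0 t,
        (fb (γ s ω) + fA (γ s ω) * ((γ s ω).2 - Aux B (1/2) s ω)) := by
      intro ω
      rw [← hγ0, hftc, intervalIntegral.integral_of_le ht.le]
    simp only [e1]
    rw [← integral_integral_swap (f := fun s ω => fb (γ s ω) + fA (γ s ω) * ((γ s ω).2 - Aux B (1/2) s ω)) hI1]
    rw [setIntegral_congr_fun measurableSet_Ioc hslice]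
    rw [integral_integral_swap (f := fun s ω => rexp (B s ω + -1/2 * s) *
        (fb (Pair B t ω) + fA (Pair B t ω) * (A B t ω - A B s ω))) hI2]
    refine integral_congr_ae (ae_of_all _ fun ω => ?_)
    simp only
    rw [← intervalIntegral.integral_of_le ht.le]
    exact path_int hB ω _ _
  have hMf : ∫ ω, f (γ t ω) ∂P = ∫ ω, M B t ω * f (Pair B t ω) ∂P := by
    have hΦ : Measurable (fun x : ℝ × ℝ × ℝ => f (x.1 - t / 2, x.2.1)) := by fun_prop
    have := cm hB 1 ht.le ht.le hΦ
    simp only [shifted_split hB ht.le le_rfl, sub_self, mul_zero, add_zero, min_self] at this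
    refine Eq.trans (integral_congr_ae (ae_of_all _ fun ω => ?_)) (this.symm.trans
      (integral_congr_ae (ae_of_all _ fun ω => ?_)))
    · simp only [γ, sub_self, mul_zero, add_zero]
      have e : B t ω - t / 2 + t = B t ω + 1 * t - t / 2 := by ring
      rw [e]
    · simp only [Pair, M]
      congr 2; ring
  have hIM : Integrable (fun ω => M B t ω) P := by
    have := (exp_moment hB 1 ht.le).1
    simp only [M, Real.exp_sub]
    simp only [one_mul] at this
    exact this.div_const _
  have hmf : Measurable (fun ω => f (Pair B t ω)) := hf.comp hmP
  have hbP : ∀ ω, |f (Pair B t ω)| ≤ C := fun ω => b1 _ (A_pos hB ht ω)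
  have hIMf : Integrable (fun ω => M B t ω * f (Pair B t ω)) P :=
    hIM.mul_bdd (c := C) hmf.aestronglyMeasurable (ae_of_all _ hbP)
  have hIf : Integrable (fun ω => f (Pair B t ω)) P :=
    Integrable.mono' (g := fun _ => C) (integrable_const _) hmf.aestronglyMeasurable
      (ae_of_all _ hbP)
  have hI3 : Integrable (fun ω => A B t ω * fb (Pair B t ω) + A B t ω ^ 2 / 2 * fA (Pair B t ω)) P := by
    refine hI2.integral_prod_right.congr (ae_of_all _ fun ω => ?_)
    simp only
    rw [← intervalIntegral.integral_of_le ht.le]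
    exact path_int hB ω _ _
  have e : (fun ω => A B t ω * fb (Pair B t ω) + A B t ω ^ 2 / 2 * fA (Pair B t ω)
      - (M B t ω - 1) * f (Pair B t ω)) = fun ω => (A B t ω * fb (Pair B t ω) +
      A B t ω ^ 2 / 2 * fA (Pair B t ω)) - (M B t ω * f (Pair B t ω) - f (Pair B t ω)) := by
    ext ω; ring
  have h9 : Integrable (fun ω => M B t ω * f (Pair B t ω) - f (Pair B t ω)) P := hIMf.sub hIf
  rw [e, integral_sub hI3 h9, integral_sub hIMf hIf, ← key, hMf]
  ring

end EMD

namespace EMD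

open scoped NNReal ENNReal Topology
open Filter

variable {Ω : Type*} [MeasurableSpace Ω] {P : Measure Ω} {B : ℝ → Ω → ℝ}

/-- The denominators along the flow. -/
def Qf (z : ℝ × ℝ × ℝ) : ℝ := 1 + z.1 * z.2.2

/-- The building block `u(β) v(α) w` of the flow; `z = (c, b, A)`. -/
def Jf (u v : ℝ → ℝ) (z : ℝ × ℝ × ℝ) : ℝ :=
  u (z.2.1 - 2 * Real.log (Qf z)) * v (z.2.2 * (Qf z)⁻¹) *
    rexp (2 * z.1 * (rexp z.2.1 * (Qf z)⁻¹ - 1))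

/-- Partial derivative in `b`. -/
def Jb (u u' v : ℝ → ℝ) (z : ℝ × ℝ × ℝ) : ℝ :=
  Jf u' v z + 2 * z.1 * rexp z.2.1 * (Qf z)⁻¹ * Jf u v z

/-- Partial derivative in `A`. -/
def JA (u u' v v' : ℝ → ℝ) (z : ℝ × ℝ × ℝ) : ℝ :=
  -(2 * z.1 * (Qf z)⁻¹) * Jf u' v z + (Qf z)⁻¹ ^ 2 * Jf u v' z
    - 2 * z.1 ^ 2 * rexp z.2.1 * (Qf z)⁻¹ ^ 2 * Jf u v z

/-- Derivative in `c`. -/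
def Jc (u u' v v' : ℝ → ℝ) (z : ℝ × ℝ × ℝ) : ℝ :=
  -2 * (z.2.2 * Jb u u' v z + z.2.2 ^ 2 / 2 * JA u u' v v' z - (rexp z.2.1 - 1) * Jf u v z)

lemma measurable_Qf : Measurable Qf := by unfold Qf; fun_prop

lemma measurable_Jf {u v : ℝ → ℝ} (hu : Measurable u) (hv : Measurable v) :
    Measurable (Jf u v) := by
  have := measurable_Qf
  unfold Jf
  fun_prop

lemma measurable_Jb {u u' v : ℝ → ℝ} (hu : Measurable u) (hu' : Measurable u')
    (hv : Measurable v) : Measurable (Jb u u' v) := by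
  have := measurable_Qf
  have := measurable_Jf hu hv
  have := measurable_Jf hu' hv
  unfold Jb
  fun_prop

lemma measurable_JA {u u' v v' : ℝ → ℝ} (hu : Measurable u) (hu' : Measurable u')
    (hv : Measurable v) (hv' : Measurable v') : Measurable (JA u u' v v') := by
  have := measurable_Qf
  have := measurable_Jf hu hv
  have := measurable_Jf hu' hv
  have := measurable_Jf hu hv'
  unfold JA
  fun_prop

lemma measurable_Jc {u u' v v' : ℝ → ℝ} (hu : Measurable u) (hu' : Measurable u')
    (hv : Measurable v) (hv' : Measurable v') : Measurable (Jc u u' v v') := by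
  have := measurable_Jf hu hv
  have := measurable_Jb hu hu' hv
  have := measurable_JA hu hu' hv hv'
  unfold Jc
  fun_prop

/-- The domain of the flow. -/
def Df : Set (ℝ × ℝ × ℝ) := {z | 0 ≤ z.1 ∧ 0 ≤ z.2.2}

lemma Qf_pos {z : ℝ × ℝ × ℝ} (hz : z ∈ Df) : 0 < Qf z := by
  have := mul_nonneg hz.1 hz.2
  unfold Qf; linarith

lemma contOn_Qinv : ContinuousOn (fun z => (Qf z)⁻¹) Df := by
  refine ContinuousOn.inv₀ ?_ fun z hz => (Qf_pos hz).ne'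
  unfold Qf; fun_prop

lemma contOn_Jf {u v : ℝ → ℝ} (hu : Continuous u) (hv : Continuous v) :
    ContinuousOn (Jf u v) Df := by
  have h1 := contOn_Qinv
  have h2 : ContinuousOn (fun z => Real.log (Qf z)) Df := by
    refine ContinuousOn.log ?_ fun z hz => (Qf_pos hz).ne'
    unfold Qf; fun_prop
  have h3 : ContinuousOn (fun z : ℝ × ℝ × ℝ => z.2.1 - 2 * Real.log (Qf z)) Df := by fun_prop
  have h4 : ContinuousOn (fun z : ℝ × ℝ × ℝ => z.2.2 * (Qf z)⁻¹) Df := by fun_prop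
  have h5 : ContinuousOn (fun z : ℝ × ℝ × ℝ =>
    rexp (2 * z.1 * (rexp z.2.1 * (Qf z)⁻¹ - 1))) Df := by fun_prop
  exact ((hu.comp_continuousOn h3).mul (hv.comp_continuousOn h4)).mul h5

lemma contOn_Jb {u u' v : ℝ → ℝ} (hu : Continuous u) (hu' : Continuous u')
    (hv : Continuous v) : ContinuousOn (Jb u u' v) Df := by
  have := contOn_Qinv
  have := contOn_Jf hu hv
  have := contOn_Jf hu' hv
  unfold Jb
  fun_prop

lemma contOn_JA {u u' v v' : ℝ → ℝ} (hu : Continuous u) (hu' : Continuous u')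
    (hv : Continuous v) (hv' : Continuous v') : ContinuousOn (JA u u' v v') Df := by
  have := contOn_Qinv
  have := contOn_Jf hu hv
  have := contOn_Jf hu' hv
  have := contOn_Jf hu hv'
  unfold JA
  fun_prop

lemma contOn_Jc {u u' v v' : ℝ → ℝ} (hu : Continuous u) (hu' : Continuous u')
    (hv : Continuous v) (hv' : Continuous v') : ContinuousOn (Jc u u' v v') Df := by
  have := contOn_Jf hu hv
  have := contOn_Jb hu hu' hv
  have := contOn_JA hu hu' hv hv'
  unfold Jc
  fun_prop

lemma hasFDerivAt_Jf {u u' v v' : ℝ → ℝ} (hu : ∀ x, HasDerivAt u (u' x) x)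
    (hv : ∀ x, HasDerivAt v (v' x) x) {c : ℝ} (hc : 0 ≤ c) {p : ℝ × ℝ} (hp : 0 < p.2) :
    HasFDerivAt (fun p => Jf u v (c, p)) (Jb u u' v (c, p) • ContinuousLinearMap.fst ℝ ℝ ℝ
      + JA u u' v v' (c, p) • ContinuousLinearMap.snd ℝ ℝ ℝ) p := by
  have hq : 0 < Qf (c, p) := Qf_pos ⟨hc, hp.le⟩
  have h1 : HasFDerivAt (fun p : ℝ × ℝ => p.1) (ContinuousLinearMap.fst ℝ ℝ ℝ) p := hasFDerivAt_fst
  have h2 : HasFDerivAt (fun p : ℝ × ℝ => p.2) (ContinuousLinearMap.snd ℝ ℝ ℝ) p := hasFDerivAt_snd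
  have hQ : HasFDerivAt (fun p : ℝ × ℝ => Qf (c, p)) (c • ContinuousLinearMap.snd ℝ ℝ ℝ) p :=
    (h2.const_mul c).const_add 1
  have hinv := (hasDerivAt_inv hq.ne').comp_hasFDerivAt p hQ
  have hlog := (Real.hasDerivAt_log hq.ne').comp_hasFDerivAt p hQ
  have hβ := (hu _).comp_hasFDerivAt p (h1.sub (hlog.const_mul 2))
  have hα := (hv _).comp_hasFDerivAt p (h2.mul hinv)
  have hw := (Real.hasDerivAt_exp _).comp_hasFDerivAt p ((((Real.hasDerivAt_exp _).comp_hasFDerivAt p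
    h1).mul hinv |>.sub_const 1).const_mul (2 * c))
  refine ((hβ.mul hα).mul hw).congr_fderiv ?_
  have hqe : Qf (c, p) = 1 + c * p.2 := rfl
  refine ContinuousLinearMap.ext fun x => ?_
  obtain ⟨x, y⟩ := x
  simp [Jb, JA, Jf]
  have hq' := hq.ne'
  field_simp
  rw [hqe]
  ring

lemma hasDerivAt_Jf {u u' v v' : ℝ → ℝ} (hu : ∀ x, HasDerivAt u (u' x) x)
    (hv : ∀ x, HasDerivAt v (v' x) x) {c : ℝ} (hc : 0 ≤ c) {p : ℝ × ℝ} (hp : 0 < p.2) :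
    HasDerivAt (fun c => Jf u v (c, p)) (Jc u u' v v' (c, p)) c := by
  have hq : 0 < Qf (c, p) := Qf_pos ⟨hc, hp.le⟩
  have h1 := hasDerivAt_id c
  have hQ : HasDerivAt (fun c : ℝ => Qf (c, p)) p.2 c := by
    have := (h1.mul_const p.2).const_add 1
    rw [one_mul] at this
    exact this
  have hinv := (hasDerivAt_inv hq.ne').comp c hQ
  have hlog := (Real.hasDerivAt_log hq.ne').comp c hQ
  have hβ := (hu _).comp c ((hlog.const_mul 2).const_sub p.1)
  have hα := (hv _).comp c (hinv.const_mul p.2)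
  have hw := (Real.hasDerivAt_exp _).comp c ((h1.const_mul 2).mul
    ((hinv.const_mul (rexp p.1)).sub_const 1))
  refine ((hβ.mul hα).mul hw).congr_deriv ?_
  have hqe : Qf (c, p) = 1 + c * p.2 := rfl
  simp [Jb, JA, Jf, Jc]
  have hq' := hq.ne'
  field_simp
  rw [hqe]
  ring

end EMD

namespace EMD

open scoped NNReal ENNReal Topology
open Filter

variable {Ω : Type*} [MeasurableSpace Ω] {P : Measure Ω} {B : ℝ → Ω → ℝ}

/-- Either of the two cut-offs vanishes outside a compact box. -/
lemma flow_support {a K L : ℝ} (hL : 0 < L) (hLa : L < a)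
    {z : ℝ × ℝ × ℝ} (hc : z.1 ∈ Icc 0 (1 / a)) (hA : 0 ≤ z.2.2)
    (h1 : |z.2.1 - 2 * Real.log (Qf z)| ≤ K) (h2 : z.2.2 * (Qf z)⁻¹ < L) :
    z ∈ Icc 0 (1 / a) ×ˢ (Icc (-K) (K + 2 * Real.log (1 + (1 / a) * (L * a / (a - L)))) ×ˢ
      Icc 0 (L * a / (a - L))) := by
  have ha : 0 < a := hL.trans hLa
  obtain ⟨c, b, x⟩ := z
  simp only at hc hA h1 h2
  have hq : 0 < Qf (c, b, x) := Qf_pos ⟨hc.1, hA⟩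
  have hqe : Qf (c, b, x) = 1 + c * x := rfl
  rw [← div_eq_mul_inv, div_lt_iff₀ hq] at h2
  have hcx : c * x ≤ 1 / a * x := mul_le_mul_of_nonneg_right hc.2 hA
  have hxR : x ≤ L * a / (a - L) := by
    rw [le_div_iff₀ (by linarith)]
    have : x ≤ L * (1 + 1 / a * x) := by
      refine h2.le.trans ?_
      rw [hqe]
      exact mul_le_mul_of_nonneg_left (by linarith) hL.le
    have h3 := mul_le_mul_of_nonneg_right this ha.le
    have h4 : L * (1 + 1 / a * x) * a = L * a + L * x := by field_simp
    rw [h4] at h3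
    linarith
  have hl0 : 0 ≤ Real.log (Qf (c, b, x)) := by
    refine Real.log_nonneg ?_
    rw [hqe]
    have := mul_nonneg hc.1 hA
    linarith
  have hl1 : Real.log (Qf (c, b, x)) ≤ Real.log (1 + (1 / a) * (L * a / (a - L))) := by
    refine Real.log_le_log hq ?_
    rw [hqe]
    have := mul_le_mul_of_nonneg_left hxR (by positivity : 0 ≤ 1 / a)
    linarith
  have h1' := abs_le.1 h1
  refine ⟨hc, ⟨?_, ?_⟩, hA, hxR⟩ <;> simp only <;> linarith

/-- uniform bounds for all the flow functions -/
lemma flow_bound {a K L : ℝ} (hL : 0 < L) (hLa : L < a) {u u' v v' : ℝ → ℝ}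
    (cu : Continuous u) (cu' : Continuous u') (cv : Continuous v) (cv' : Continuous v')
    (zu : ∀ x, K < |x| → u x = 0) (zu' : ∀ x, K < |x| → u' x = 0)
    (zv : ∀ x, L ≤ x → v x = 0) (zv' : ∀ x, L ≤ x → v' x = 0) :
    ∃ C, ∀ c ∈ Icc 0 (1 / a), ∀ p : ℝ × ℝ, 0 < p.2 →
      |Jf u v (c, p)| ≤ C ∧ |Jb u u' v (c, p)| ≤ C ∧ |p.2 * JA u u' v v' (c, p)| ≤ C ∧
      |Jc u u' v v' (c, p)| ≤ C := by
  have ha : 0 < a := hL.trans hLa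
  set S : Set (ℝ × ℝ × ℝ) := Icc 0 (1 / a) ×ˢ
    (Icc (-K) (K + 2 * Real.log (1 + (1 / a) * (L * a / (a - L)))) ×ˢ
      Icc 0 (L * a / (a - L))) with hS
  have hSc : IsCompact S := isCompact_Icc.prod (isCompact_Icc.prod isCompact_Icc)
  have hSD : S ⊆ Df := fun z hz => ⟨hz.1.1, hz.2.2.1⟩
  let G : ℝ × ℝ × ℝ → ℝ := fun z => |Jf u v z| + |Jb u u' v z| + |z.2.2 * JA u u' v v' z| +
    |Jc u u' v v' z|
  have hG : ContinuousOn G S := by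
    have h1 := (contOn_Jf cu cv).mono hSD
    have h2 := (contOn_Jb cu cu' cv).mono hSD
    have h3 := (contOn_JA cu cu' cv cv').mono hSD
    have h4 := (contOn_Jc cu cu' cv cv').mono hSD
    have h5 : ContinuousOn (fun z : ℝ × ℝ × ℝ => z.2.2 * JA u u' v v' z) S := by fun_prop
    exact ((h1.abs.add h2.abs).add h5.abs).add h4.abs
  obtain ⟨C, hC⟩ := hSc.exists_bound_of_continuousOn hG
  refine ⟨max C 0, fun c hc p hp => ?_⟩
  suffices h : G (c, p) ≤ max C 0 by
    have a1 := abs_nonneg (Jf u v (c, p))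
    have a2 := abs_nonneg (Jb u u' v (c, p))
    have a3 := abs_nonneg (p.2 * JA u u' v v' (c, p))
    have a4 := abs_nonneg (Jc u u' v v' (c, p))
    simp only [G] at h
    refine ⟨?_, ?_, ?_, ?_⟩ <;> linarith
  by_cases hz : (c, p) ∈ S
  · exact ((le_abs_self _).trans (hC _ hz)).trans (le_max_left _ _)
  · have : K < |p.1 - 2 * Real.log (Qf (c, p))| ∨ L ≤ p.2 * (Qf (c, p))⁻¹ := by
      by_contra hcon
      push Not at hcon
      exact hz (flow_support hL hLa hc hp.le hcon.1 hcon.2)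
    have e1 : Jf u v (c, p) = 0 := by
      rcases this with h | h
      · simp [Jf, zu _ h]
      · simp [Jf, zv _ h]
    have e2 : Jf u' v (c, p) = 0 := by
      rcases this with h | h
      · simp [Jf, zu' _ h]
      · simp [Jf, zv _ h]
    have e3 : Jf u v' (c, p) = 0 := by
      rcases this with h | h
      · simp [Jf, zu _ h]
      · simp [Jf, zv' _ h]
    simp [G, Jb, JA, Jc, e1, e2, e3]

/-- Invariance of the flow. -/
lemma flow_inv (hB : IsBrownianMotion P B) {t a K L : ℝ} (ht : 0 < t) (hL : 0 < L) (hLa : L < a)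
    {u u' v v' : ℝ → ℝ} (hu : ∀ x, HasDerivAt u (u' x) x) (hv : ∀ x, HasDerivAt v (v' x) x)
    (cu' : Continuous u') (cv' : Continuous v')
    (zu : ∀ x, K < |x| → u x = 0) (zu' : ∀ x, K < |x| → u' x = 0)
    (zv : ∀ x, L ≤ x → v x = 0) (zv' : ∀ x, L ≤ x → v' x = 0) :
    Integrable (fun ω => Jf u v (1 / a, Pair B t ω)) P ∧
    ∫ ω, Jf u v (1 / a, Pair B t ω) ∂P = ∫ ω, Jf u v (0, Pair B t ω) ∂P := by
  have := hB.isProbabilityMeasure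
  have ha : 0 < a := hL.trans hLa
  have ha' : 0 ≤ 1 / a := by positivity
  have cu : Continuous u := continuous_iff_continuousAt.2 fun x => (hu x).continuousAt
  have cv : Continuous v := continuous_iff_continuousAt.2 fun x => (hv x).continuousAt
  obtain ⟨C, hC⟩ := flow_bound hL hLa cu cu' cv cv' zu zu' zv zv'
  have hmP := measurable_Pair hB t
  have m1 := measurable_Jf cu.measurable cv.measurable
  have m2 := measurable_Jb cu.measurable cu'.measurable cv.measurable
  have m3 := measurable_JA cu.measurable cu'.measurable cv.measurable cv'.measurable
  have m4 := measurable_Jc cu.measurable cu'.measurable cv.measurable cv'.measurable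
  have hpos : ∀ ω, 0 < (Pair B t ω).2 := fun ω => A_pos hB ht ω
  have hint : ∀ c ∈ Icc 0 (1 / a), Integrable (fun ω => Jf u v (c, Pair B t ω)) P := by
    intro c hc
    refine Integrable.mono' (g := fun _ => C) (integrable_const _) ?_
      (ae_of_all _ fun ω => (hC c hc _ (hpos ω)).1)
    exact (m1.comp (measurable_const.prodMk hmP)).aestronglyMeasurable
  have hI : Integrable (fun q : ℝ × Ω => Jc u u' v v' (q.1, Pair B t q.2))
      ((volume.restrict (Ioc 0 (1 / a))).prod P) := by
    refine Integrable.mono' (g := fun _ => C) (integrable_const _) ?_ ?_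
    · exact (m4.comp (measurable_fst.prodMk (hmP.comp measurable_snd))).aestronglyMeasurable
    · have : ∀ᵐ q ∂((volume.restrict (Ioc 0 (1 / a))).prod P), q.1 ∈ Ioc 0 (1 / a) :=
        Measure.quasiMeasurePreserving_fst.ae (ae_restrict_mem measurableSet_Ioc)
      exact this.mono fun q hq => (hC q.1 ⟨hq.1.le, hq.2⟩ _ (hpos q.2)).2.2.2
  have hftc : ∀ ω, Jf u v (1 / a, Pair B t ω) - Jf u v (0, Pair B t ω)
      = ∫ c in Ioc 0 (1 / a), Jc u u' v v' (c, Pair B t ω) := by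
    intro ω
    rw [← intervalIntegral.integral_of_le ha']
    symm
    refine intervalIntegral.integral_eq_sub_of_hasDerivAt
      (f := fun c => Jf u v (c, Pair B t ω)) ?_ ?_
    · intro c hc
      rw [uIcc_of_le ha'] at hc
      exact hasDerivAt_Jf hu hv hc.1 (hpos ω)
    · rw [intervalIntegrable_iff_integrableOn_Ioc_of_le ha']
      refine Integrable.mono' (g := fun _ => C) (integrable_const _) ?_ ?_
      · exact (m4.comp (measurable_id.prodMk measurable_const)).aestronglyMeasurable
      · refine (ae_restrict_mem measurableSet_Ioc).mono fun c hc => ?_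
        exact (hC c ⟨hc.1.le, hc.2⟩ _ (hpos ω)).2.2.2
  have hzero : ∀ c ∈ Ioc 0 (1 / a), ∫ ω, Jc u u' v v' (c, Pair B t ω) ∂P = 0 := by
    intro c hc
    have hc' : c ∈ Icc 0 (1 / a) := ⟨hc.1.le, hc.2⟩
    have := ibp hB (C := C) ht (f := fun p => Jf u v (c, p)) (fb := fun p => Jb u u' v (c, p))
      (fA := fun p => JA u u' v v' (c, p)) (by fun_prop) (by fun_prop) (by fun_prop)
      (fun p hp => hasFDerivAt_Jf hu hv hc.1.le hp)
      (fun p hp => (hC c hc' p hp).1) (fun p hp => (hC c hc' p hp).2.1)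
      (fun p hp => (hC c hc' p hp).2.2.1)
    simp only [Jc]
    rw [integral_const_mul]
    have e : ∀ ω, rexp (Pair B t ω).1 = M B t ω := fun ω => rfl
    have e' : ∀ ω, (Pair B t ω).2 = A B t ω := fun ω => rfl
    simp only [e, e']
    rw [this, mul_zero]
  refine ⟨hint _ ⟨ha', le_rfl⟩, ?_⟩
  rw [← sub_eq_zero, ← integral_sub (hint _ ⟨ha', le_rfl⟩) (hint _ ⟨le_rfl, ha'⟩)]
  simp only [hftc]
  rw [← integral_integral_swap (f := fun c ω => Jc u u' v v' (c, Pair B t ω)) hI]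
  rw [setIntegral_congr_fun (g := fun _ => (0 : ℝ)) measurableSet_Ioc hzero]
  simp

end EMD

namespace EMD

open scoped NNReal ENNReal Topology
open Filter

variable {Ω : Type*} [MeasurableSpace Ω] {P : Measure Ω} {B : ℝ → Ω → ℝ}

/-- the exchange of limits -/
lemma lim_lemma {X Y : Ω → ℝ} {Xk Yk : ℕ → Ω → ℝ} (hX : Integrable X P)
    (mX : ∀ k, Measurable (Xk k)) (mY : Measurable Y) (iY : ∀ k, Integrable (Yk k) P)
    (X0 : ∀ k ω, 0 ≤ Xk k ω) (X1 : ∀ k ω, Xk k ω ≤ X ω)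
    (Y0 : ∀ k ω, 0 ≤ Yk k ω) (Y1 : ∀ k ω, Yk k ω ≤ Y ω)
    (tX : ∀ ω, Tendsto (fun k => Xk k ω) atTop (𝓝 (X ω)))
    (tY : ∀ ω, Tendsto (fun k => Yk k ω) atTop (𝓝 (Y ω)))
    (h : ∀ k, ∫ ω, Yk k ω ∂P = ∫ ω, Xk k ω ∂P) : ∫ ω, Y ω ∂P = ∫ ω, X ω ∂P := by
  have hXk : ∀ k, Integrable (Xk k) P := fun k =>
    hX.mono' (mX k).aestronglyMeasurable (ae_of_all _ fun ω => by
      rw [Real.norm_eq_abs, abs_of_nonneg (X0 k ω)]; exact X1 k ω)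
  have hY : Integrable Y P := by
    refine ⟨mY.aestronglyMeasurable, ?_⟩
    rw [hasFiniteIntegral_iff_ofReal (ae_of_all _ fun ω => (Y0 0 ω).trans (Y1 0 ω))]
    have e : ∀ ω, ENNReal.ofReal (Y ω) = liminf (fun k => ENNReal.ofReal (Yk k ω)) atTop :=
      fun ω => (ENNReal.tendsto_ofReal (tY ω)).liminf_eq.symm
    simp only [e]
    refine (lintegral_liminf_le' fun k => (iY k).aemeasurable.ennreal_ofReal).trans_lt ?_
    refine lt_of_le_of_lt (b := ENNReal.ofReal (∫ ω, X ω ∂P)) ?_ ENNReal.ofReal_lt_top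
    refine (liminf_le_liminf (v := fun _ => ENNReal.ofReal (∫ ω, X ω ∂P))
      (Eventually.of_forall fun k => ?_)).trans (by simp)
    rw [← ofReal_integral_eq_lintegral_ofReal (iY k) (ae_of_all _ (Y0 k)), h k]
    exact ENNReal.ofReal_le_ofReal (integral_mono (hXk k) hX (X1 k))
  have l1 : Tendsto (fun k => ∫ ω, Yk k ω ∂P) atTop (𝓝 (∫ ω, Y ω ∂P)) := by
    refine tendsto_integral_of_dominated_convergence Y (fun k => (iY k).aestronglyMeasurable) hY
      (fun k => ae_of_all _ fun ω => ?_) (ae_of_all _ tY)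
    rw [Real.norm_eq_abs, abs_of_nonneg (Y0 k ω)]; exact Y1 k ω
  have l2 : Tendsto (fun k => ∫ ω, Xk k ω ∂P) atTop (𝓝 (∫ ω, X ω ∂P)) := by
    refine tendsto_integral_of_dominated_convergence X (fun k => (mX k).aestronglyMeasurable) hX
      (fun k => ae_of_all _ fun ω => ?_) (ae_of_all _ tX)
    rw [Real.norm_eq_abs, abs_of_nonneg (X0 k ω)]; exact X1 k ω
  simp only [h] at l1
  exact tendsto_nhds_unique l1 l2

/-- cut-off of the exponential -/
def uk (ν : ℝ) (k : ℕ) (x : ℝ) : ℝ :=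
  rexp (ν * x) * (Real.smoothTransition (k + 1 - x) * Real.smoothTransition (k + 1 + x))

/-- cut-off of the positive part -/
def vk (a : ℝ) (k : ℕ) (x : ℝ) : ℝ :=
  (a - x) * Real.smoothTransition ((a - x) / a * (k + 1) - 1)

lemma cd_uk (ν : ℝ) (k : ℕ) : ContDiff ℝ 1 (uk ν k) := by
  unfold uk
  refine ContDiff.mul (by fun_prop) (ContDiff.mul ?_ ?_)
  · exact Real.smoothTransition.contDiff.comp (by fun_prop)
  · exact Real.smoothTransition.contDiff.comp (by fun_prop)

lemma cd_vk (a : ℝ) (k : ℕ) : ContDiff ℝ 1 (vk a k) := by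
  unfold vk
  refine ContDiff.mul (by fun_prop) ?_
  exact Real.smoothTransition.contDiff.comp (by fun_prop)

lemma uk_zero (ν : ℝ) (k : ℕ) {x : ℝ} (hx : (k : ℝ) + 1 < |x|) : uk ν k x = 0 := by
  unfold uk
  rcases lt_abs.1 hx with h | h
  · rw [Real.smoothTransition.zero_of_nonpos (x := k + 1 - x) (by linarith)]; simp
  · rw [Real.smoothTransition.zero_of_nonpos (x := k + 1 + x) (by linarith)]; simp

lemma vk_zero {a : ℝ} (ha : 0 < a) (k : ℕ) {x : ℝ} (hx : a * (1 - 1 / (k + 1)) < x) :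
    vk a k x = 0 := by
  unfold vk
  rw [Real.smoothTransition.zero_of_nonpos, mul_zero]
  have hk : (0 : ℝ) < k + 1 := by positivity
  have : (a - x) / a < 1 / (k + 1) := by
    rw [div_lt_iff₀ ha]; linarith
  rw [lt_div_iff₀ hk] at this
  linarith

lemma uk_bd (ν : ℝ) (k : ℕ) (x : ℝ) : 0 ≤ uk ν k x ∧ uk ν k x ≤ rexp (ν * x) := by
  unfold uk
  have h1 := Real.smoothTransition.nonneg (k + 1 - x)
  have h2 := Real.smoothTransition.nonneg (k + 1 + x)
  have h3 := Real.smoothTransition.le_one (k + 1 - x)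
  have h4 := Real.smoothTransition.le_one (k + 1 + x)
  refine ⟨by positivity, ?_⟩
  exact mul_le_of_le_one_right (Real.exp_pos _).le (mul_le_one₀ h3 h2 h4)

lemma vk_bd {a : ℝ} (ha : 0 < a) (k : ℕ) (x : ℝ) : 0 ≤ vk a k x ∧ vk a k x ≤ max (a - x) 0 := by
  rcases le_or_gt a x with h | h
  · have hk : (0 : ℝ) < k + 1 := by positivity
    have : vk a k x = 0 := vk_zero ha k (lt_of_lt_of_le (by
      have : 0 < a * (1 / ((k : ℝ) + 1)) := by positivity
      linarith) h)
    rw [this]; exact ⟨le_rfl, le_max_right _ _⟩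
  · unfold vk
    have h1 := Real.smoothTransition.nonneg ((a - x) / a * (k + 1) - 1)
    have h2 := Real.smoothTransition.le_one ((a - x) / a * (k + 1) - 1)
    refine ⟨mul_nonneg (by linarith) h1, (mul_le_of_le_one_right (by linarith) h2).trans
      (le_max_left _ _)⟩

lemma uk_tendsto (ν x : ℝ) : Tendsto (fun k => uk ν k x) atTop (𝓝 (rexp (ν * x))) := by
  refine tendsto_const_nhds.congr' ?_
  obtain ⟨N, hN⟩ := exists_nat_ge |x|
  filter_upwards [eventually_ge_atTop N] with k hk
  have hk' : |x| ≤ (k : ℝ) := hN.trans (by exact_mod_cast hk)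
  have := abs_le.1 hk'
  unfold uk
  rw [Real.smoothTransition.one_of_one_le (x := k + 1 - x) (by linarith),
    Real.smoothTransition.one_of_one_le (x := k + 1 + x) (by linarith)]
  simp

lemma vk_tendsto {a : ℝ} (ha : 0 < a) (x : ℝ) :
    Tendsto (fun k => vk a k x) atTop (𝓝 (max (a - x) 0)) := by
  refine tendsto_const_nhds.congr' ?_
  rcases le_or_gt a x with h | h
  · refine Eventually.of_forall fun k => ?_
    have h1 := vk_bd ha k x
    rw [max_eq_right (by linarith)] at h1 ⊢
    exact le_antisymm h1.1 h1.2
  · obtain ⟨N, hN⟩ := exists_nat_ge (2 / ((a - x) / a))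
    filter_upwards [eventually_ge_atTop N] with k hk
    have hk' : 2 / ((a - x) / a) ≤ (k : ℝ) := hN.trans (by exact_mod_cast hk)
    have hp : 0 < (a - x) / a := div_pos (by linarith) ha
    rw [div_le_iff₀ hp] at hk'
    unfold vk
    rw [Real.smoothTransition.one_of_one_le (by nlinarith), max_eq_left (by linarith), mul_one]

lemma deriv_zero_of {g : ℝ → ℝ} {U : Set ℝ} (hU : IsOpen U) (hg : ∀ x ∈ U, g x = 0) :
    ∀ x ∈ U, deriv g x = 0 := by
  intro x hx
  have : g =ᶠ[𝓝 x] fun _ => 0 := by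
    filter_upwards [hU.mem_nhds hx] with y hy using hg y hy
  rw [this.deriv_eq]; simp

lemma flow_k (hB : IsBrownianMotion P B) {t a : ℝ} (ν : ℝ) (ht : 0 < t) (ha : 0 < a) (k : ℕ) :
    Integrable (fun ω => Jf (uk ν k) (vk a k) (1 / a, Pair B t ω)) P ∧
    ∫ ω, Jf (uk ν k) (vk a k) (1 / a, Pair B t ω) ∂P
      = ∫ ω, Jf (uk ν k) (vk a k) (0, Pair B t ω) ∂P := by
  have hk : (0 : ℝ) < k + 1 := by positivity
  have hk1 : 1 / ((k : ℝ) + 1) ≤ 1 := by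
    rw [div_le_one hk]; linarith [(Nat.cast_nonneg k : (0 : ℝ) ≤ k)]
  have hk0 : 0 < 1 / ((k : ℝ) + 1) := by positivity
  have hL1 : a * (1 - 1 / ((k : ℝ) + 1)) < a * (1 - 1 / ((k : ℝ) + 1) / 2) :=
    mul_lt_mul_of_pos_left (by linarith) ha
  refine flow_inv hB (K := k + 1) (L := a * (1 - 1 / ((k : ℝ) + 1) / 2)) (a := a) ht
    (mul_pos ha (by linarith)) (mul_lt_of_lt_one_right ha (by linarith))
    (u' := deriv (uk ν k)) (v' := deriv (vk a k))
    (fun x => ((cd_uk ν k).differentiable one_ne_zero x).hasDerivAt)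
    (fun x => ((cd_vk a k).differentiable one_ne_zero x).hasDerivAt)
    ((cd_uk ν k).continuous_deriv le_rfl) ((cd_vk a k).continuous_deriv le_rfl)
    (fun x hx => uk_zero ν k hx) ?_ (fun x hx => vk_zero ha k (hL1.trans_le hx)) ?_
  · intro x hx
    exact deriv_zero_of (U := {x | (k : ℝ) + 1 < |x|}) (isOpen_lt (by fun_prop) (by fun_prop))
      (fun y hy => uk_zero ν k hy) x hx
  · intro x hx
    exact deriv_zero_of (U := Ioi (a * (1 - 1 / ((k : ℝ) + 1)))) isOpen_Ioi
      (fun y hy => vk_zero ha k hy) x (hL1.trans_le hx)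

lemma flow_lim (hB : IsBrownianMotion P B) {t a : ℝ} (ν : ℝ) (ht : 0 < t) (ha : 0 < a) :
    ∫ ω, Jf (fun x => rexp (ν * x)) (fun x => max (a - x) 0) (1 / a, Pair B t ω) ∂P
      = ∫ ω, rexp (ν * (B t ω - t / 2)) * max (a - A B t ω) 0 ∂P := by
  have hmP := measurable_Pair hB t
  have hmA := measurable_A hB t
  have hmB := hB.measurable t
  have j0 : ∀ (u v : ℝ → ℝ) ω, Jf u v (0, Pair B t ω) = u (B t ω - t / 2) * v (A B t ω) := by
    intro u v ω
    simp [Jf, Qf, Pair]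
  have bd : ∀ k (z : ℝ × ℝ × ℝ), 0 ≤ Jf (uk ν k) (vk a k) z ∧
      Jf (uk ν k) (vk a k) z ≤ Jf (fun x => rexp (ν * x)) (fun x => max (a - x) 0) z := by
    intro k z
    unfold Jf
    have h1 := uk_bd ν k (z.2.1 - 2 * Real.log (Qf z))
    have h2 := vk_bd ha k (z.2.2 * (Qf z)⁻¹)
    refine ⟨mul_nonneg (mul_nonneg h1.1 h2.1) (Real.exp_pos _).le, ?_⟩
    refine mul_le_mul_of_nonneg_right ?_ (Real.exp_pos _).le
    exact mul_le_mul h1.2 h2.2 h2.1 (Real.exp_pos _).le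
  have tt : ∀ z : ℝ × ℝ × ℝ, Tendsto (fun k => Jf (uk ν k) (vk a k) z) atTop
      (𝓝 (Jf (fun x => rexp (ν * x)) (fun x => max (a - x) 0) z)) := by
    intro z
    unfold Jf
    exact ((uk_tendsto ν _).mul (vk_tendsto ha _)).mul tendsto_const_nhds
  have e : ∀ ω, rexp (ν * (B t ω - t / 2)) * max (a - A B t ω) 0
      = Jf (fun x => rexp (ν * x)) (fun x => max (a - x) 0) (0, Pair B t ω) := by
    intro ω; rw [j0]
  have mm : ∀ k c, Measurable (fun ω => Jf (uk ν k) (vk a k) (c, Pair B t ω)) := fun k c =>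
    (measurable_Jf (cd_uk ν k).continuous.measurable (cd_vk a k).continuous.measurable).comp
      (measurable_const.prodMk hmP)
  have mm' : ∀ c, Measurable (fun ω => Jf (fun x => rexp (ν * x)) (fun x => max (a - x) 0)
      (c, Pair B t ω)) := fun c =>
    (measurable_Jf (by fun_prop) (by fun_prop)).comp (measurable_const.prodMk hmP)
  have hX : Integrable (fun ω => rexp (ν * (B t ω - t / 2)) * max (a - A B t ω) 0) P := by
    refine Integrable.mono' (g := fun ω => rexp (ν * B t ω) * (rexp (-(ν * (t / 2))) * a))
      ((exp_moment hB ν ht.le).1.mul_const _) ?_ (ae_of_all _ fun ω => ?_)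
    · refine Measurable.aestronglyMeasurable ?_
      fun_prop
    · have h0 := A_pos hB ht ω
      have h1 : max (a - A B t ω) 0 ≤ a := max_le (by linarith) ha.le
      rw [norm_mul, Real.norm_eq_abs, Real.norm_eq_abs, abs_of_pos (Real.exp_pos _),
        abs_of_nonneg (le_max_right _ _), ← mul_assoc, ← Real.exp_add]
      have : ν * (B t ω - t / 2) = ν * B t ω + -(ν * (t / 2)) := by ring
      rw [this]
      exact mul_le_mul_of_nonneg_left h1 (Real.exp_pos _).le
  simp only [e] at hX ⊢
  exact lim_lemma hX (Xk := fun k ω => Jf (uk ν k) (vk a k) (0, Pair B t ω))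
    (Yk := fun k ω => Jf (uk ν k) (vk a k) (1 / a, Pair B t ω)) (fun k => mm k 0) (mm' _)
    (fun k => (flow_k hB ν ht ha k).1)
    (fun k ω => (bd k _).1) (fun k ω => (bd k _).2) (fun k ω => (bd k _).1) (fun k ω => (bd k _).2)
    (fun ω => tt _) (fun ω => tt _) (fun k => (flow_k hB ν ht ha k).2)

lemma Jf_end {a : ℝ} (ha : 0 < a) (ν : ℝ) {b x : ℝ} (hx : 0 < x) :
    Jf (fun x => rexp (ν * x)) (fun x => max (a - x) 0) (1 / a, b, x)
      = a ^ (2 * ν + 2) * (rexp b ^ ν * (a + x) ^ (-(2 * ν + 1)) *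
        rexp (2 * rexp b / (a + x) - 2 / a)) := by
  have hax : 0 < a + x := by linarith
  have hq : Qf (1 / a, b, x) = (a + x) / a := by simp only [Qf]; field_simp
  have h1 : a - x * ((a + x) / a)⁻¹ = a ^ 2 / (a + x) := by field_simp; ring
  unfold Jf
  simp only [hq, h1]
  rw [max_eq_left (by positivity), Real.log_div hax.ne' ha.ne']
  rw [Real.rpow_def_of_pos ha, Real.rpow_def_of_pos hax, Real.rpow_def_of_pos (Real.exp_pos b),
    Real.log_exp]
  have h2 : a ^ 2 / (a + x) = rexp (2 * Real.log a - Real.log (a + x)) := by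
    rw [Real.exp_sub, Real.exp_log hax, two_mul, Real.exp_add, Real.exp_log ha]; ring
  rw [h2]
  simp only [← Real.exp_add]
  congr 1
  have h3 : 2 * (1 / a) * (rexp b * ((a + x) / a)⁻¹ - 1) = 2 * rexp b / (a + x) - 2 / a := by
    field_simp
  rw [h3]; ring

/-- The main formula. -/
lemma main_formula (hB : IsBrownianMotion P B) (t a ν : ℝ)
    (ht : 0 < t) (ha : 0 < a) (hν : ν ≠ 0) :
    (∫ ω, max (Adrift B ν t ω - a) 0 ∂P)
      = (Real.exp (ν * t) - 1) / ν - a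
        + Real.exp (ν * t / 2 - ν ^ 2 * t / 2) * a ^ (2 * ν + 2) *
          ∫ ω, M B t ω ^ ν * (a + A B t ω) ^ (-(2 * ν + 1)) *
                Real.exp (2 * M B t ω / (a + A B t ω) - 2 / a) ∂P := by
  have := hB.isProbabilityMeasure
  obtain ⟨hI, hmean⟩ := Adrift_mean hB hν ht.le
  have hm : Measurable (Adrift B ν t) := measurable_Aux hB (ν - 1/2) t
  have hI2 : Integrable (fun ω => max (a - Adrift B ν t ω) 0) P := by
    refine Integrable.mono' (g := fun _ => a) (integrable_const _)
      (Measurable.aestronglyMeasurable (by fun_prop)) (ae_of_all _ fun ω => ?_)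
    have h0 : 0 ≤ Adrift B ν t ω := Aux_nonneg ht.le ω
    rw [Real.norm_eq_abs, abs_of_nonneg (le_max_right _ _)]
    exact max_le (by linarith) ha.le
  have h1 : ∫ ω, max (Adrift B ν t ω - a) 0 ∂P
      = (rexp (ν * t) - 1) / ν - a + ∫ ω, max (a - Adrift B ν t ω) 0 ∂P := by
    have e : (fun ω => max (Adrift B ν t ω - a) 0)
        = fun ω => (Adrift B ν t ω - a) + max (a - Adrift B ν t ω) 0 := by
      ext ω
      rcases le_total a (Adrift B ν t ω) with h | h
      · rw [max_eq_left (by linarith), max_eq_right (by linarith)]; ring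
      · rw [max_eq_right (by linarith), max_eq_left (by linarith)]; ring
    have hI3 : Integrable (fun ω => Adrift B ν t ω - a) P := hI.sub (integrable_const a)
    rw [e, integral_add hI3 hI2, integral_sub hI (integrable_const a),
      hmean]
    simp
  have h2 : ∫ ω, max (a - Adrift B ν t ω) 0 ∂P = rexp (ν * t / 2 - ν ^ 2 * t / 2) *
      ∫ ω, rexp (ν * (B t ω - t / 2)) * max (a - A B t ω) 0 ∂P := by
    have hΦ : Measurable (fun x : ℝ × ℝ × ℝ => max (a - x.2.1) 0) := by fun_prop
    have h := cm hB ν ht.le ht.le hΦ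
    simp only at h
    rw [← integral_const_mul]
    refine Eq.trans (integral_congr_ae (ae_of_all _ fun ω => ?_)) (h.symm.trans
      (integral_congr_ae (ae_of_all _ fun ω => ?_)))
    · simp only [Adrift]
      congr 2
      refine intervalIntegral.integral_congr fun u hu => ?_
      rw [uIcc_of_le ht.le] at hu
      simp only [min_eq_left hu.2]; congr 1; ring
    · simp only
      rw [← mul_assoc, ← Real.exp_add]
      congr 2; ring
  rw [h1, h2, ← flow_lim hB ν ht ha, mul_assoc, ← integral_const_mul (a ^ (2 * ν + 2))]
  congr 2
  refine integral_congr_ae (ae_of_all _ fun ω => ?_)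
  exact Jf_end ha ν (A_pos hB ht ω)

end EMD
variable {Ω : Type*} [MeasurableSpace Ω] (P : MeasureTheory.Measure Ω) (B : ℝ → Ω → ℝ)

theorem expected_max_drift (hB : IsBrownianMotion P B) (t a ν : ℝ)
    (ht : 0 < t) (ha : 0 < a) (hν : ν ≠ 0) :
    (∫ ω, max (Adrift B ν t ω - a) 0 ∂P)
      = (Real.exp (ν * t) - 1) / ν - a
        + Real.exp (ν * t / 2 - ν ^ 2 * t / 2) * a ^ (2 * ν + 2) *
          ∫ ω, M B t ω ^ ν * (a + A B t ω) ^ (-(2 * ν + 1)) *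
                Real.exp (2 * M B t ω / (a + A B t ω) - 2 / a) ∂P := by
  exact EMD.main_formula hB t a ν ht ha hν
end
end

section
/- For every t > 0 and every a > 0, E[ (A_t − a)^+ ] = t − a + a² · E[ (a + A_t)^{-1} · exp( 2·M_t/(a + A_t) − 2/a ) ]. -/
open MeasureTheory ProbabilityTheory Real Set

noncomputable section

variable {Ω : Type*} [MeasurableSpace Ω] (P : MeasureTheory.Measure Ω) (B : ℝ → Ω → ℝ)


lemma gauss_tilt (h : ℝ) (hh : 0 < h) (S : Set ℝ) (hS : MeasurableSet S) :
    ∫⁻ x, ENNReal.ofReal (Real.exp (x - h / 2)) * S.indicator 1 x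
      ∂(gaussianReal 0 (Real.toNNReal h)) = gaussianReal h (Real.toNNReal h) S := by
  have hv : Real.toNNReal h ≠ 0 := by simpa using hh
  have hmeas : Measurable fun x : ℝ =>
      ENNReal.ofReal (Real.exp (x - h / 2)) * S.indicator (1 : ℝ → ENNReal) x :=
    (by fun_prop : Measurable fun x : ℝ => ENNReal.ofReal (Real.exp (x - h / 2))).mul
        (measurable_one.indicator hS)
  rw [gaussianReal_of_var_ne_zero _ hv, gaussianReal_of_var_ne_zero _ hv,
    lintegral_withDensity_eq_lintegral_mul _ (measurable_gaussianPDF _ _) hmeas,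
    withDensity_apply _ hS, ← lintegral_indicator hS]
  refine lintegral_congr fun x => ?_
  by_cases hx : x ∈ S
  · simp only [Pi.mul_apply, hx, indicator_of_mem, Pi.one_apply, mul_one]
    rw [gaussianPDF, gaussianPDF, ← ENNReal.ofReal_mul (gaussianPDFReal_nonneg _ _ _)]
    congr 1
    simp only [gaussianPDFReal]
    rw [mul_assoc, ← Real.exp_add, Real.coe_toNNReal _ hh.le]
    congr 2
    field_simp
    ring
  · simp [hx]

lemma gauss_mass (h : ℝ) (hh : 0 < h) :
    ∫⁻ x, ENNReal.ofReal (Real.exp (x - h / 2))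
      ∂(gaussianReal 0 (Real.toNNReal h)) = 1 := by
  have := gauss_tilt h hh univ MeasurableSet.univ
  simpa using this

/-- tilted measure -/
def tilt (u : ℝ) : Measure Ω := P.withDensity fun ω => ENNReal.ofReal (M B u ω)

variable {P B}

lemma meas_M (hB : IsBrownianMotion P B) (u : ℝ) : Measurable (M B u) := by
  have := hB.measurable u
  unfold M
  fun_prop

lemma lint_M (hB : IsBrownianMotion P B) (u : ℝ) (hu : 0 < u) :
    ∫⁻ ω, ENNReal.ofReal (M B u ω) ∂P = 1 := by
  have h1 := hB.gaussian_increments 0 u le_rfl hu.le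
  simp only [hB.start, sub_zero] at h1
  rw [← gauss_mass u hu, ← h1, lintegral_map (by fun_prop) (hB.measurable u)]
  rfl

lemma inc_law (hB : IsBrownianMotion P B) (h : ℝ) (hh : 0 < h) (n : ℕ) :
    (tilt P B (n * h)).map (fun ω (k : ℕ) => B ((k + 1 : ℕ) * h) ω - B (k * h) ω)
    = P.map (fun ω (k : ℕ) => B ((k + 1 : ℕ) * h) ω - B (k * h) ω + if k < n then h else 0) := by
  classical
  have := hB.isProbabilityMeasure
  have hm := hB.measurable
  have hind := hB.indep_increments (fun k => k * h)
    (fun i j hij => by dsimp only; gcongr) (by simp)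
  have hgi : ∀ k : ℕ, P.map (fun ω => B ((k + 1 : ℕ) * h) ω - B (k * h) ω)
      = gaussianReal 0 (Real.toNNReal h) := fun k => by
    rw [hB.gaussian_increments _ _ (by positivity) (by push_cast; nlinarith)]
    congr 2; push_cast; ring
  have hmi : ∀ k : ℕ, Measurable (fun ω => B ((k + 1 : ℕ) * h) ω - B (k * h) ω) :=
    fun k => by fun_prop
  let μ : ℕ → Measure ℝ := fun k => gaussianReal (if k < n then h else 0) (Real.toNNReal h)
  trans Measure.infinitePi μ
  · refine Measure.eq_infinitePi μ fun s T hT => ?_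
    have hpi : MeasurableSet (Set.pi (s : Set ℕ) T) := MeasurableSet.pi s.countable_toSet fun i _ => hT i
    have hmm : Measurable (fun ω (k : ℕ) => B ((k + 1 : ℕ) * h) ω - B (k * h) ω) := by fun_prop
    rw [Measure.map_apply hmm hpi, tilt, withDensity_apply _ (hmm hpi),
      ← lintegral_indicator (hmm hpi)]
    let g : ℕ → ℝ → ENNReal := fun k x =>
      (if k < n then ENNReal.ofReal (Real.exp (x - h / 2)) else 1) *
      (if k ∈ s then (T k).indicator 1 x else 1)
    have hg : ∀ k, Measurable (g k) := fun k => by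
      have : Measurable ((T k).indicator (1 : ℝ → ENNReal)) := measurable_one.indicator (hT k)
      simp only [g]
      split_ifs <;> fun_prop
    have hprod := lintegral_prod_eq_prod_lintegral_of_indepFun (μ := P) (s ∪ Finset.range n)
      (fun k ω => g k (B ((k + 1 : ℕ) * h) ω - B (k * h) ω))
      (hind.comp g hg) (fun k => (hg k).comp (hmi k))
    have hMprod : ∀ ω, ENNReal.ofReal (M B (n * h) ω) = ∏ k ∈ s ∪ Finset.range n,
        (if k < n then ENNReal.ofReal
          (Real.exp (B ((k + 1 : ℕ) * h) ω - B (k * h) ω - h / 2)) else 1) := by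
      intro ω
      rw [← Finset.prod_subset (Finset.subset_union_right (s₁ := s)) (by simp +contextual)]
      rw [Finset.prod_congr rfl (g := fun k : ℕ => ENNReal.ofReal
          (Real.exp (B ((k + 1 : ℕ) * h) ω - B (k * h) ω - h / 2)))
          (fun k hk => by simp [Finset.mem_range.1 hk])]
      rw [← ENNReal.ofReal_prod_of_nonneg (fun _ _ => (Real.exp_pos _).le), ← Real.exp_sum,
        Finset.sum_sub_distrib, Finset.sum_range_sub (fun k : ℕ => B (k * h) ω)]
      simp [M, hB.start]
      congr 1
      ring_nf
    have hIprod : ∀ ω, (((fun ω (k : ℕ) => B ((k + 1 : ℕ) * h) ω - B (k * h) ω) ⁻¹'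
          (Set.pi (s : Set ℕ) T)).indicator (1 : Ω → ENNReal) ω) = ∏ k ∈ s ∪ Finset.range n,
        (if k ∈ s then (T k).indicator (1 : ℝ → ENNReal)
          (B ((k + 1 : ℕ) * h) ω - B (k * h) ω) else 1) := by
      intro ω
      rw [← Finset.prod_subset (Finset.subset_union_left (s₂ := Finset.range n)) (by simp +contextual)]
      rw [Finset.prod_congr rfl (g := fun k : ℕ => (T k).indicator (1 : ℝ → ENNReal)
          (B ((k + 1 : ℕ) * h) ω - B (k * h) ω))
          (fun k hk => by simp [hk])]
      by_cases hω : ∀ k ∈ s, B ((k + 1 : ℕ) * h) ω - B (k * h) ω ∈ T k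
      · rw [indicator_of_mem, Finset.prod_eq_one]
        · rfl
        · intro k hk
          rw [indicator_of_mem (hω k hk)]; rfl
        · intro k hk
          exact hω k hk
      · rw [indicator_of_notMem]
        · push Not at hω
          obtain ⟨k, hk, hkT⟩ := hω
          rw [Finset.prod_eq_zero hk]
          rw [indicator_of_notMem hkT]
        · intro h'
          exact hω fun k hk => h' k hk
    have e1 : ∀ ω, ((fun ω (k : ℕ) => B ((k + 1 : ℕ) * h) ω - B (k * h) ω) ⁻¹'
          (Set.pi (s : Set ℕ) T)).indicator (fun ω => ENNReal.ofReal (M B (n * h) ω)) ω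
        = ∏ k ∈ s ∪ Finset.range n, g k (B ((k + 1 : ℕ) * h) ω - B (k * h) ω) := by
      intro ω
      simp only [g]
      rw [Finset.prod_mul_distrib, ← hMprod, ← hIprod]
      simp [indicator_apply]
    rw [lintegral_congr e1, hprod]
    have e2 : ∀ k, ∫⁻ ω, g k (B ((k + 1 : ℕ) * h) ω - B (k * h) ω) ∂P
        = if k ∈ s then μ k (T k) else 1 := by
      intro k
      rw [← lintegral_map (hg k) (hmi k), hgi k]
      simp only [g, μ]
      split_ifs with h1 h2 h2
      · exact gauss_tilt h hh (T k) (hT k)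
      · simpa using gauss_mass h hh
      · simp [lintegral_indicator, hT k]
      · simp
    rw [Finset.prod_congr rfl fun k _ => e2 k,
      ← Finset.prod_subset (Finset.subset_union_left (s₂ := Finset.range n)) (by simp +contextual)]
    exact Finset.prod_congr rfl fun k hk => by simp [hk]
  · symm
    have hi2 := hind.comp (fun k x => x + if k < n then h else 0) (fun k => by fun_prop)
    have := hi2.map_fun_eq_infinitePi_map (fun k => by
      have := hmi k
      simp only [Function.comp_def]; fun_prop)
    simp only [Function.comp_def] at this
    rw [this]
    congr 1
    ext1 k
    have h3 : P.map (fun ω => B ((k + 1 : ℕ) * h) ω - B (k * h) ω + if k < n then h else 0)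
      = (P.map (fun ω => B ((k + 1 : ℕ) * h) ω - B (k * h) ω)).map
        (· + if k < n then h else 0) := by
      rw [Measure.map_map (by fun_prop) (hmi k)]; rfl
    rw [h3, hgi k, gaussianReal_map_add_const]
    simp [μ]

lemma grid_law (hB : IsBrownianMotion P B) (h : ℝ) (hh : 0 < h) (n : ℕ) :
    (tilt P B (n * h)).map (fun ω (k : ℕ) => B (k * h) ω)
    = P.map (fun ω (k : ℕ) => B (k * h) ω + min (k * h) (n * h)) := by
  have hm := hB.measurable
  have hS : Measurable (fun (x : ℕ → ℝ) (k : ℕ) => ∑ i ∈ Finset.range k, x i) := by fun_prop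
  have := congrArg (Measure.map (fun (x : ℕ → ℝ) (k : ℕ) => ∑ i ∈ Finset.range k, x i))
    (inc_law hB h hh n)
  rw [Measure.map_map hS (by fun_prop), Measure.map_map hS (by fun_prop)] at this
  convert this using 2
  · ext ω k
    simp only [Function.comp]
    rw [Finset.sum_range_sub (fun k : ℕ => B (k * h) ω)]
    simp [hB.start]
  · ext ω k
    simp only [Function.comp]
    rw [Finset.sum_add_distrib, Finset.sum_range_sub (fun k : ℕ => B (k * h) ω)]
    simp only [Nat.cast_zero, zero_mul, hB.start, sub_zero, add_right_inj]
    induction k with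
    | zero => simp; positivity
    | succ k ih =>
      rw [Finset.sum_range_succ, ← ih]
      split_ifs with hk
      · have : ((k + 1 : ℕ) : ℝ) ≤ n := by exact_mod_cast hk
        rw [min_eq_left (by gcongr), min_eq_left (by gcongr)]
        push_cast; ring
      · have : (n : ℝ) ≤ k := by exact_mod_cast not_lt.1 hk
        rw [min_eq_right (by gcongr; push_cast; linarith), min_eq_right (by gcongr)]
        ring

/-- path functional -/
def Aint (b : ℝ → ℝ) (t : ℝ) : ℝ := ∫ s in (0 : ℝ)..t, Real.exp (b s - s / 2)

/-- discretised functional -/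
def Rint (h t : ℝ) (x : ℕ → ℝ) : ℝ :=
  ∫ s in (0 : ℝ)..t, Real.exp (x ⌊s / h⌋₊ - (⌊s / h⌋₊ * h) / 2)

lemma meas_eval_floor (h : ℝ) : Measurable (fun p : (ℕ → ℝ) × ℝ => p.1 ⌊p.2 / h⌋₊) := by
  have h1 : Measurable (fun p : (ℕ → ℝ) × ℕ => p.1 p.2) :=
    measurable_from_prod_countable_left fun k => measurable_pi_apply k
  exact h1.comp (measurable_fst.prodMk (Nat.measurable_floor.comp (measurable_snd.div_const h)))

lemma meas_Rint (h t : ℝ) (ht : 0 ≤ t) : Measurable (Rint h t) := by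
  unfold Rint
  simp_rw [intervalIntegral.integral_of_le ht]
  have h1 := meas_eval_floor h
  have h2 : Measurable (fun p : (ℕ → ℝ) × ℝ => (⌊p.2 / h⌋₊ : ℝ)) := by fun_prop
  have h3 : Measurable (fun p : (ℕ → ℝ) × ℝ =>
    Real.exp (p.1 ⌊p.2 / h⌋₊ - (⌊p.2 / h⌋₊ * h) / 2)) := by fun_prop
  exact (h3.stronglyMeasurable.integral_prod_right (ν := volume.restrict (Ioc 0 t))).measurable

lemma floor_tendsto (u : ℝ) (hu : 0 < u) (s : ℝ) (hs : 0 ≤ s) :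
    Filter.Tendsto (fun n : ℕ => (⌊s / (u / (n + 1 : ℕ))⌋₊ : ℝ) * (u / (n + 1 : ℕ)))
      Filter.atTop (nhds s) := by
  have h0 : Filter.Tendsto (fun n : ℕ => s - u / (n + 1 : ℕ)) Filter.atTop (nhds s) := by
    have := (tendsto_const_div_atTop_nhds_zero_nat u).comp (Filter.tendsto_add_atTop_nat 1)
    simpa using this.const_sub s
  refine tendsto_of_tendsto_of_tendsto_of_le_of_le h0 tendsto_const_nhds ?_ ?_
  · intro n
    have hh : 0 < u / (n + 1 : ℕ) := by positivity
    have := Nat.lt_floor_add_one (s / (u / (n + 1 : ℕ)))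
    rw [div_lt_iff₀ hh] at this
    dsimp only
    linarith
  · intro n
    have hh : 0 < u / (n + 1 : ℕ) := by positivity
    have := Nat.floor_le (a := s / (u / (n + 1 : ℕ))) (by positivity)
    rwa [le_div_iff₀ hh] at this

lemma Rint_tendsto (b : ℝ → ℝ) (hb : Continuous b) (u : ℝ) (hu : 0 < u) (t : ℝ) (ht : 0 ≤ t) :
    Filter.Tendsto (fun n : ℕ => Rint (u / (n + 1 : ℕ)) t
      (fun k => b (k * (u / (n + 1 : ℕ))))) Filter.atTop (nhds (Aint b t)) := by
  have hc : Continuous fun s => Real.exp (b s - s / 2) := by fun_prop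
  obtain ⟨C, hC⟩ := (isCompact_Icc (a := 0) (b := t)).exists_bound_of_continuousOn hc.continuousOn
  unfold Rint Aint
  refine intervalIntegral.tendsto_integral_filter_of_dominated_convergence (fun _ => C) ?_ ?_ ?_ ?_
  · refine Filter.Eventually.of_forall fun n => ?_
    have h2 : Measurable (fun s : ℝ => (⌊s / (u / (n + 1 : ℕ))⌋₊ : ℝ)) := by fun_prop
    have := hc.measurable.comp (h2.mul_const (u / (n + 1 : ℕ)))
    exact this.aestronglyMeasurable
  · refine Filter.Eventually.of_forall fun n => Filter.Eventually.of_forall fun s hs => ?_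
    rw [uIoc_of_le ht] at hs
    refine hC _ ⟨by positivity, ?_⟩
    have hh : 0 < u / (n + 1 : ℕ) := by positivity
    have := Nat.floor_le (a := s / (u / (n + 1 : ℕ))) (div_nonneg hs.1.le hh.le)
    rw [le_div_iff₀ hh] at this
    exact this.trans hs.2
  · exact intervalIntegrable_const
  · refine Filter.Eventually.of_forall fun s hs => ?_
    rw [uIoc_of_le ht] at hs
    exact (hc.tendsto s).comp (floor_tendsto u hu s hs.1.le)

lemma meas_Aint (hB : IsBrownianMotion P B) (t : ℝ) (ht : 0 ≤ t) (f : ℝ → ℝ) (hf : Continuous f) :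
    Measurable fun ω => Aint (fun s => B s ω + f s) t := by
  refine measurable_of_tendsto_metrizable (f := fun (n : ℕ) ω => Rint (1 / (n + 1 : ℕ)) t
      (fun k => B (k * (1 / (n + 1 : ℕ))) ω + f (k * (1 / (n + 1 : ℕ))))) ?_ ?_
  · intro n
    have := hB.measurable
    exact (meas_Rint _ t ht).comp (by fun_prop)
  · rw [tendsto_pi_nhds]
    intro ω
    have := hB.continuous_paths ω
    exact Rint_tendsto (fun s => B s ω + f s) (by fun_prop) 1 one_pos t ht

lemma meas_A (hB : IsBrownianMotion P B) (t : ℝ) (ht : 0 ≤ t) : Measurable (A B t) := by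
  have := meas_Aint hB t ht (fun _ => 0) continuous_const
  simp only [Aint, add_zero] at this
  exact this

lemma isFinite_tilt (hB : IsBrownianMotion P B) (u : ℝ) (hu : 0 < u) :
    IsFiniteMeasure (tilt P B u) :=
  isFiniteMeasure_withDensity (by rw [lint_M hB u hu]; simp)

/-- Cameron-Martin, at the level of laws. -/
lemma cm_law (hB : IsBrownianMotion P B) (u t : ℝ) (hu : 0 < u) (ht : 0 ≤ t) :
    (tilt P B u).map (fun ω => (B t ω, A B u ω, A B t ω))
    = P.map (fun ω => (B t ω + min t u, Aint (fun s => B s ω + min s u) u,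
        Aint (fun s => B s ω + min s u) t)) := by
  have := hB.isProbabilityMeasure
  have := isFinite_tilt hB u hu
  have hm := hB.measurable
  have mA := meas_A hB
  have mA' := fun t ht => meas_Aint hB t ht (fun s => min s u) (by fun_prop)
  have m1 : Measurable (fun ω => (B t ω, A B u ω, A B t ω)) :=
    (hm t).prodMk ((mA u hu.le).prodMk (mA t ht))
  have m2 : Measurable (fun ω => (B t ω + min t u, Aint (fun s => B s ω + min s u) u,
        Aint (fun s => B s ω + min s u) t)) :=
    ((hm t).add_const _).prodMk ((mA' u hu.le).prodMk (mA' t ht))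
  refine ext_of_forall_integral_eq_of_IsFiniteMeasure fun Φ => ?_
  rw [integral_map m1.aemeasurable (by fun_prop), integral_map m2.aemeasurable (by fun_prop)]
  let R : ℕ → (ℕ → ℝ) → ℝ × ℝ × ℝ := fun n x =>
    (x ⌊t / (u / (n + 1 : ℕ))⌋₊, Rint (u / (n + 1 : ℕ)) u x, Rint (u / (n + 1 : ℕ)) t x)
  have hR : ∀ n, Measurable (R n) := fun n =>
    (measurable_pi_apply _).prodMk ((meas_Rint _ u hu.le).prodMk (meas_Rint _ t ht))
  have hconv : ∀ b : ℝ → ℝ, Continuous b → Filter.Tendsto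
      (fun n : ℕ => R n (fun k => b (k * (u / (n + 1 : ℕ))))) Filter.atTop
      (nhds (b t, Aint b u, Aint b t)) := fun b hb =>
    ((hb.tendsto t).comp (floor_tendsto u hu t ht)).prodMk_nhds
      ((Rint_tendsto b hb u hu u hu.le).prodMk_nhds (Rint_tendsto b hb u hu t ht))
  have hx1 : ∀ n : ℕ, Measurable (fun ω (k : ℕ) => B (k * (u / (n + 1 : ℕ))) ω) :=
    fun n => by fun_prop
  have hx2 : ∀ n : ℕ, Measurable (fun ω (k : ℕ) =>
    B (k * (u / (n + 1 : ℕ))) ω + min (k * (u / (n + 1 : ℕ))) u) :=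
    fun n => by fun_prop
  have L1 : Filter.Tendsto (fun n : ℕ => ∫ ω, Φ (R n (fun k => B (k * (u / (n + 1 : ℕ))) ω))
      ∂(tilt P B u)) Filter.atTop (nhds (∫ ω, Φ (B t ω, A B u ω, A B t ω) ∂(tilt P B u))) := by
    refine tendsto_integral_of_dominated_convergence (fun _ => ‖Φ‖) ?_ (integrable_const _) ?_ ?_
    · exact fun n => (Φ.continuous.measurable.comp ((hR n).comp (hx1 n))).aestronglyMeasurable
    · exact fun n => Filter.Eventually.of_forall fun ω => Φ.norm_coe_le_norm _
    · exact Filter.Eventually.of_forall fun ω =>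
        (Φ.continuous.tendsto _).comp (hconv (fun s => B s ω) (hB.continuous_paths ω))
  have L2 : Filter.Tendsto (fun n : ℕ => ∫ ω, Φ (R n (fun k => B (k * (u / (n + 1 : ℕ))) ω
        + min (k * (u / (n + 1 : ℕ))) u))
      ∂P) Filter.atTop (nhds (∫ ω, Φ (B t ω + min t u, Aint (fun s => B s ω + min s u) u,
        Aint (fun s => B s ω + min s u) t) ∂P)) := by
    refine tendsto_integral_of_dominated_convergence (fun _ => ‖Φ‖) ?_ (integrable_const _) ?_ ?_
    · exact fun n => (Φ.continuous.measurable.comp ((hR n).comp (hx2 n))).aestronglyMeasurable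
    · exact fun n => Filter.Eventually.of_forall fun ω => Φ.norm_coe_le_norm _
    · refine Filter.Eventually.of_forall fun ω => ?_
      have := hB.continuous_paths ω
      exact (Φ.continuous.tendsto _).comp (hconv (fun s => B s ω + min s u) (by fun_prop))
  refine tendsto_nhds_unique L1 (L2.congr fun n => ?_)
  have hn : ((n + 1 : ℕ) : ℝ) * (u / (n + 1 : ℕ)) = u := by
    have : ((n + 1 : ℕ) : ℝ) ≠ 0 := by positivity
    field_simp
  have hg := grid_law hB (u / (n + 1 : ℕ)) (by positivity) (n + 1)
  rw [hn] at hg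
  have hs : Measurable (fun x => Φ (R n x)) := Φ.continuous.measurable.comp (hR n)
  rw [← integral_map (f := fun x => Φ (R n x)) (hx2 n).aemeasurable hs.aestronglyMeasurable, ← hg,
    integral_map (hx1 n).aemeasurable hs.aestronglyMeasurable]

lemma cm (hB : IsBrownianMotion P B) (u t : ℝ) (hu : 0 < u) (ht : 0 ≤ t)
    (Φ : ℝ × ℝ × ℝ → ℝ) (hΦ : Measurable Φ) :
    ∫ ω, M B u ω * Φ (B t ω, A B u ω, A B t ω) ∂P
    = ∫ ω, Φ (B t ω + min t u, Aint (fun s => B s ω + min s u) u,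
        Aint (fun s => B s ω + min s u) t) ∂P := by
  have hm := hB.measurable
  have mA := meas_A hB
  have mA' := fun t ht => meas_Aint hB t ht (fun s => min s u) (by fun_prop)
  have m1 : Measurable (fun ω => (B t ω, A B u ω, A B t ω)) :=
    (hm t).prodMk ((mA u hu.le).prodMk (mA t ht))
  have m2 : Measurable (fun ω => (B t ω + min t u, Aint (fun s => B s ω + min s u) u,
        Aint (fun s => B s ω + min s u) t)) :=
    ((hm t).add_const _).prodMk ((mA' u hu.le).prodMk (mA' t ht))
  rw [← integral_map (f := Φ) m2.aemeasurable hΦ.aestronglyMeasurable, ← cm_law hB u t hu ht,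
    integral_map m1.aemeasurable hΦ.aestronglyMeasurable, tilt,
    integral_withDensity_eq_integral_toReal_smul (by
      have := meas_M hB u
      fun_prop) (by simp)]
  refine integral_congr_ae (Filter.Eventually.of_forall fun ω => ?_)
  simp [ENNReal.toReal_ofReal (Real.exp_pos _).le, M]

lemma meas_Aint' (hB : IsBrownianMotion P B) (t : ℝ) (f : ℝ → ℝ) (hf : Continuous f) :
    Measurable fun ω => Aint (fun s => B s ω + f s) t := by
  have h1 : Measurable (Function.uncurry fun (ω : Ω) s => Real.exp (B s ω + f s - s / 2)) := by
    have : Measurable (Function.uncurry fun s (ω : Ω) => Real.exp (B s ω + f s - s / 2)) := by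
      refine measurable_uncurry_of_continuous_of_measurable ?_ ?_
      · intro ω
        have := hB.continuous_paths ω
        fun_prop
      · intro s
        have := hB.measurable s
        fun_prop
    exact this.comp measurable_swap
  unfold Aint intervalIntegral
  exact (h1.stronglyMeasurable.integral_prod_right (ν := volume.restrict (Ioc 0 t))).measurable.sub
    (h1.stronglyMeasurable.integral_prod_right (ν := volume.restrict (Ioc t 0))).measurable

lemma meas_A' (hB : IsBrownianMotion P B) (t : ℝ) : Measurable (A B t) := by
  have := meas_Aint' hB t (fun _ => 0) continuous_const
  simp only [Aint, add_zero] at this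
  exact this

lemma hasDerivAt_Aint (b : ℝ → ℝ) (hb : Continuous b) (u : ℝ) :
    HasDerivAt (Aint b) (Real.exp (b u - u / 2)) u := by
  have hc : Continuous fun s => Real.exp (b s - s / 2) := by fun_prop
  exact intervalIntegral.integral_hasDerivAt_right (hc.intervalIntegrable _ _)
    (hc.stronglyMeasurableAtFilter _ _) hc.continuousAt

lemma continuous_Aint (b : ℝ → ℝ) (hb : Continuous b) : Continuous (Aint b) :=
  continuous_iff_continuousAt.2 fun u => (hasDerivAt_Aint b hb u).continuousAt

lemma Aint_strictMono (b : ℝ → ℝ) (hb : Continuous b) : StrictMono (Aint b) :=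
  strictMono_of_deriv_pos fun u => by
    rw [(hasDerivAt_Aint b hb u).deriv]; exact Real.exp_pos _

lemma Aint_zero (b : ℝ → ℝ) : Aint b 0 = 0 := by simp [Aint]

lemma Aint_min_left (b : ℝ → ℝ) (u : ℝ) (hu : 0 ≤ u) :
    Aint (fun s => b s + min s u) u = Aint (fun s => b s + s) u := by
  unfold Aint
  refine intervalIntegral.integral_congr fun s hs => ?_
  rw [uIcc_of_le hu] at hs
  simp [min_eq_left hs.2]

lemma Aint_min (b : ℝ → ℝ) (hb : Continuous b) (u t : ℝ) (hu : 0 ≤ u) (hut : u ≤ t) :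
    Aint (fun s => b s + min s u) t
      = Aint (fun s => b s + s) u + Real.exp u * (Aint b t - Aint b u) := by
  have hc : Continuous fun s => Real.exp (b s - s / 2) := by fun_prop
  have hc' : Continuous fun s => Real.exp (b s + min s u - s / 2) := by fun_prop
  rw [← Aint_min_left b u hu]
  unfold Aint
  rw [← intervalIntegral.integral_add_adjacent_intervals (hc'.intervalIntegrable 0 u)
    (hc'.intervalIntegrable u t), ← intervalIntegral.integral_add_adjacent_intervals
    (hc.intervalIntegrable 0 u) (hc.intervalIntegrable u t), add_sub_cancel_left,
    ← intervalIntegral.integral_const_mul]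
  congr 1
  refine intervalIntegral.integral_congr fun s hs => ?_
  rw [uIcc_of_le hut] at hs
  simp only [min_eq_right hs.1]
  rw [← Real.exp_add]
  ring_nf

lemma A_eq (t : ℝ) (ω : Ω) : A B t ω = Aint (fun s => B s ω) t := rfl

lemma A_pos (hB : IsBrownianMotion P B) (t : ℝ) (ht : 0 < t) (ω : Ω) : 0 < A B t ω := by
  rw [A_eq, ← Aint_zero (fun s => B s ω)]
  exact Aint_strictMono _ (hB.continuous_paths ω) ht

lemma integrable_M (hB : IsBrownianMotion P B) (u : ℝ) (hu : 0 < u) : Integrable (M B u) P := by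
  refine ⟨(meas_M hB u).aestronglyMeasurable, ?_⟩
  rw [hasFiniteIntegral_iff_ofReal
    (Filter.Eventually.of_forall fun ω => show 0 ≤ M B u ω from (Real.exp_pos _).le),
    lint_M hB u hu]
  simp

lemma integral_M (hB : IsBrownianMotion P B) (u : ℝ) (hu : 0 < u) : ∫ ω, M B u ω ∂P = 1 := by
  rw [integral_eq_lintegral_of_nonneg_ae
    (Filter.Eventually.of_forall fun ω => show 0 ≤ M B u ω from (Real.exp_pos _).le)
    (meas_M hB u).aestronglyMeasurable, lint_M hB u hu]
  simp

lemma meas_M_uncurry (hB : IsBrownianMotion P B) :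
    Measurable (Function.uncurry fun u ω => M B u ω) := by
  refine measurable_uncurry_of_continuous_of_measurable ?_ fun u => meas_M hB u
  intro ω
  have := hB.continuous_paths ω
  unfold M
  fun_prop

lemma integrable_M_prod (hB : IsBrownianMotion P B) (t : ℝ) (ht : 0 < t) :
    Integrable (Function.uncurry fun u ω => M B u ω) ((volume.restrict (uIoc 0 t)).prod P) := by
  have := hB.isProbabilityMeasure
  rw [integrable_prod_iff (meas_M_uncurry hB).aestronglyMeasurable, uIoc_of_le ht.le]
  constructor
  · filter_upwards [ae_restrict_mem measurableSet_Ioc] with u hu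
    exact integrable_M hB u hu.1
  · have : Integrable (fun _ : ℝ => (1 : ℝ)) (volume.restrict (Ioc 0 t)) := integrable_const _
    refine this.congr ?_
    filter_upwards [ae_restrict_mem measurableSet_Ioc] with u hu
    simp only [Function.uncurry]
    rw [← integral_M hB u hu.1]
    refine integral_congr_ae (Filter.Eventually.of_forall fun ω => ?_)
    simp [M]

lemma integral_A (hB : IsBrownianMotion P B) (t : ℝ) (ht : 0 < t) : ∫ ω, A B t ω ∂P = t := by
  have := hB.isProbabilityMeasure
  have h := intervalIntegral_integral_swap (integrable_M_prod hB t ht)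
  change _ = ∫ ω, A B t ω ∂P at h
  rw [← h, intervalIntegral.integral_congr_ae (g := fun _ => (1 : ℝ))]
  · simp
  · refine Filter.Eventually.of_forall fun u hu => ?_
    rw [uIoc_of_le ht.le] at hu
    exact integral_M hB u hu.1

lemma integrable_A (hB : IsBrownianMotion P B) (t : ℝ) (ht : 0 < t) : Integrable (A B t) P := by
  by_contra h
  have := integral_A hB t ht
  rw [integral_undef h] at this
  linarith

/-- the derivative functional -/
def Jf (t : ℝ) (Fy Fq : ℝ → ℝ → ℝ) (p : ℝ × ℝ × ℝ) : ℝ :=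
  Fy p.2.2 (Real.exp (p.1 - t / 2) / p.2.2 ^ 2) * (p.2.2 - p.2.1)
  + Fq p.2.2 (Real.exp (p.1 - t / 2) / p.2.2 ^ 2) *
    (Real.exp (p.1 - t / 2) / p.2.2 ^ 2
      - 2 * (Real.exp (p.1 - t / 2) / p.2.2 ^ 2) * (p.2.2 - p.2.1) / p.2.2)

lemma Jf_bound (t : ℝ) (Fy Fq : ℝ → ℝ → ℝ) (K : ℝ)
    (hKy : ∀ y q, 0 < y → 0 < q → |y * Fy y q| ≤ K)
    (hKq : ∀ y q, 0 < y → 0 < q → |q * Fq y q| ≤ K)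
    (b c y : ℝ) (hy : 0 < y) (hc : 0 ≤ c) (hcy : c ≤ y) : |Jf t Fy Fq (b, c, y)| ≤ 2 * K := by
  unfold Jf
  simp only
  have hq : 0 < Real.exp (b - t / 2) / y ^ 2 := by positivity
  generalize Real.exp (b - t / 2) / y ^ 2 = q at hq ⊢
  have e1 : Fy y q * (y - c) + Fq y q * (q - 2 * q * (y - c) / y)
      = (y * Fy y q) * ((y - c) / y) + (q * Fq y q) * (1 - 2 * ((y - c) / y)) := by
    field_simp
  have h0 : 0 ≤ (y - c) / y := div_nonneg (by linarith) hy.le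
  have h1 : (y - c) / y ≤ 1 := by rw [div_le_one hy]; linarith
  generalize (y - c) / y = r at *
  rw [e1]
  have a1 := hKy y q hy hq
  have a2 := hKq y q hy hq
  have hK : 0 ≤ K := (abs_nonneg _).trans a1
  calc _ ≤ |(y * Fy y q) * r| + |(q * Fq y q) * (1 - 2 * r)| := abs_add_le _ _
    _ = |y * Fy y q| * |r| + |q * Fq y q| * |1 - 2 * r| := by
      rw [abs_mul (y * Fy y q), abs_mul (q * Fq y q)]
    _ ≤ K * 1 + K * 1 := by
      gcongr
      · rw [abs_of_nonneg h0]; exact h1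
      · rw [abs_le]; constructor <;> linarith
    _ = 2 * K := by ring

lemma meas_Jf (t : ℝ) (Fy Fq : ℝ → ℝ → ℝ) (hmy : Measurable (Function.uncurry Fy))
    (hmq : Measurable (Function.uncurry Fq)) : Measurable (Jf t Fy Fq) := by
  unfold Jf
  have h1 : Measurable fun p : ℝ × ℝ × ℝ =>
      (p.2.2, Real.exp (p.1 - t / 2) / p.2.2 ^ 2) := by fun_prop
  have h2 : Measurable fun p : ℝ × ℝ × ℝ =>
      Fy p.2.2 (Real.exp (p.1 - t / 2) / p.2.2 ^ 2) := hmy.comp h1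
  have h3 : Measurable fun p : ℝ × ℝ × ℝ =>
      Fq p.2.2 (Real.exp (p.1 - t / 2) / p.2.2 ^ 2) := hmq.comp h1
  fun_prop

/-- Integration by parts along the adapted direction. -/
lemma ibp (hB : IsBrownianMotion P B) (t : ℝ) (ht : 0 < t) (F Fy Fq : ℝ → ℝ → ℝ) (K : ℝ)
    (hm : Measurable (Function.uncurry F))
    (hmy : Measurable (Function.uncurry Fy)) (hmq : Measurable (Function.uncurry Fq))
    (hK : ∀ y q, 0 < y → 0 < q → |F y q| ≤ K)
    (hKy : ∀ y q, 0 < y → 0 < q → |y * Fy y q| ≤ K)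
    (hKq : ∀ y q, 0 < y → 0 < q → |q * Fq y q| ≤ K)
    (hD : ∀ (y q : ℝ → ℝ) (y' q' u : ℝ), 0 < y u → HasDerivAt y y' u → HasDerivAt q q' u →
      HasDerivAt (fun v => F (y v) (q v)) (Fy (y u) (q u) * y' + Fq (y u) (q u) * q') u) :
    ∫ ω, F (A B t ω) (M B t ω / A B t ω ^ 2) * (M B t ω - 1) ∂P
      = ∫ ω, Fy (A B t ω) (M B t ω / A B t ω ^ 2) * A B t ω ^ 2 / 2 ∂P := by
  have := hB.isProbabilityMeasure
  have mB := hB.measurable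
  have cB := hB.continuous_paths
  have mJ := meas_Jf t Fy Fq hmy hmq
  let α : ℝ → Ω → ℝ := fun u ω => Aint (fun s => B s ω + s) u + Real.exp u * (A B t ω - A B u ω)
  have α_deriv : ∀ ω u, HasDerivAt (fun u => α u ω) (Real.exp u * (A B t ω - A B u ω)) u := by
    intro ω u
    have h1 := hasDerivAt_Aint (fun s => B s ω + s) (by have := cB ω; fun_prop) u
    have h2 := hasDerivAt_Aint (fun s => B s ω) (cB ω) u
    have h3 := h1.add ((Real.hasDerivAt_exp u).mul (h2.const_sub (A B t ω)))
    refine h3.congr_deriv ?_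
    change Real.exp (B u ω + u - u / 2) + (Real.exp u * (A B t ω - A B u ω)
      + Real.exp u * -Real.exp (B u ω - u / 2)) = _
    have : Real.exp (B u ω + u - u / 2) = Real.exp u * Real.exp (B u ω - u / 2) := by
      rw [← Real.exp_add]; ring_nf
    rw [this]; ring
  have α_cont : ∀ ω, Continuous fun u => α u ω := fun ω =>
    continuous_iff_continuousAt.2 fun u => (α_deriv ω u).continuousAt
  have A_cont : ∀ ω, Continuous fun u => A B u ω := fun ω => continuous_Aint _ (cB ω)
  have C_cont : ∀ ω, Continuous fun u => Aint (fun s => B s ω + s) u := fun ω =>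
    continuous_Aint _ (by have := cB ω; fun_prop)
  have C_meas : ∀ u, Measurable fun ω => Aint (fun s => B s ω + s) u := fun u =>
    meas_Aint' hB u (fun s => s) continuous_id
  have α_meas : ∀ u, Measurable (α u) := fun u =>
    (C_meas u).add (((meas_A' hB t).sub (meas_A' hB u)).const_mul _)
  have A_nn : ∀ ω u, 0 ≤ u → 0 ≤ A B u ω := fun ω u hu => by
    rw [A_eq, ← Aint_zero (fun s => B s ω)]
    exact (Aint_strictMono _ (cB ω)).monotone hu
  have C_nn : ∀ ω u, 0 ≤ u → 0 ≤ Aint (fun s => B s ω + s) u := fun ω u hu => by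
    rw [← Aint_zero (fun s => B s ω + s)]
    exact (Aint_strictMono _ (by have := cB ω; fun_prop)).monotone hu
  have A_mono : ∀ ω u, u ≤ t → A B u ω ≤ A B t ω := fun ω u hu =>
    (Aint_strictMono _ (cB ω)).monotone hu
  have α_pos : ∀ ω u, 0 ≤ u → u ≤ t → 0 < α u ω := by
    intro ω u hu hut
    rw [show α u ω = Aint (fun s => B s ω + min s u) t from
      (Aint_min (fun s => B s ω) (cB ω) u t hu hut).symm,
      ← Aint_zero (fun s => B s ω + min s u)]
    exact Aint_strictMono _ (by have := cB ω; fun_prop) ht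
  have α_ge : ∀ ω u, u ≤ t → Aint (fun s => B s ω + s) u ≤ α u ω := by
    intro ω u hut
    have := A_mono ω u hut
    have : 0 ≤ Real.exp u * (A B t ω - A B u ω) :=
      mul_nonneg (Real.exp_pos _).le (by linarith)
    simp only [α]; linarith
  let D : ℝ → Ω → ℝ := fun u ω => Jf t Fy Fq (B t ω + u, Aint (fun s => B s ω + s) u, α u ω)
  let E : ℝ → Ω → ℝ := fun u ω => M B u ω * Jf t Fy Fq (B t ω, A B u ω, A B t ω)
  have D_meas : Measurable (Function.uncurry D) := by
    refine mJ.comp (g := Jf t Fy Fq) (measurable_uncurry_of_continuous_of_measurable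
      (u := fun u ω => (B t ω + u, Aint (fun s => B s ω + s) u, α u ω)) ?_ ?_)
    · intro ω
      exact (by fun_prop : Continuous fun u => B t ω + u).prodMk ((C_cont ω).prodMk (α_cont ω))
    · intro u
      exact ((mB t).add_const u).prodMk ((C_meas u).prodMk (α_meas u))
  have E_meas : Measurable (Function.uncurry E) := by
    refine (meas_M_uncurry hB).mul (mJ.comp (g := Jf t Fy Fq)
      (measurable_uncurry_of_continuous_of_measurable
      (u := fun u ω => (B t ω, A B u ω, A B t ω)) ?_ ?_))
    · intro ω
      exact continuous_const.prodMk ((A_cont ω).prodMk continuous_const)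
    · intro u
      exact (mB t).prodMk ((meas_A' hB u).prodMk (meas_A' hB t))
  have D_bound : ∀ u ω, 0 ≤ u → u ≤ t → |D u ω| ≤ 2 * K := fun u ω hu hut =>
    Jf_bound t Fy Fq K hKy hKq _ _ _ (α_pos ω u hu hut) (C_nn ω u hu) (α_ge ω u hut)
  have E_bound : ∀ u ω, 0 ≤ u → u ≤ t → |E u ω| ≤ 2 * K * M B u ω := by
    intro u ω hu hut
    have := Jf_bound t Fy Fq K hKy hKq (B t ω) _ _ (A_pos hB t ht ω) (A_nn ω u hu) (A_mono ω u hut)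
    simp only [E]
    rw [abs_mul, abs_of_pos (show 0 < M B u ω from Real.exp_pos _), mul_comm]
    gcongr
    exact (Real.exp_pos _).le
  have ae_mem : ∀ᵐ p ∂((volume.restrict (uIoc 0 t)).prod P), p.1 ∈ Ioc 0 t := by
    rw [uIoc_of_le ht.le]
    have h1 : ∀ᵐ u ∂(volume.restrict (Ioc 0 t)), u ∈ Ioc 0 t := ae_restrict_mem measurableSet_Ioc
    exact Measure.quasiMeasurePreserving_fst.ae h1
  have D_int : Integrable (Function.uncurry D) ((volume.restrict (uIoc 0 t)).prod P) := by
    have : IsFiniteMeasure (volume.restrict (uIoc 0 t)) := by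
      rw [uIoc_of_le ht.le]; infer_instance
    refine Integrable.mono' (integrable_const (2 * K)) D_meas.aestronglyMeasurable ?_
    filter_upwards [ae_mem] with p hp
    exact D_bound p.1 p.2 hp.1.le hp.2
  have E_int : Integrable (Function.uncurry E) ((volume.restrict (uIoc 0 t)).prod P) := by
    refine Integrable.mono' ((integrable_M_prod hB t ht).const_mul (2 * K))
      E_meas.aestronglyMeasurable ?_
    filter_upwards [ae_mem] with p hp
    exact E_bound p.1 p.2 hp.1.le hp.2
  have swapD := intervalIntegral_integral_swap D_int
  have swapE := intervalIntegral_integral_swap E_int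
  have hDE : ∫ u in (0 : ℝ)..t, ∫ ω, D u ω ∂P = ∫ u in (0 : ℝ)..t, ∫ ω, E u ω ∂P := by
    refine intervalIntegral.integral_congr_ae (Filter.Eventually.of_forall fun u hu => ?_)
    rw [uIoc_of_le ht.le] at hu
    simp only [E]
    rw [cm hB u t hu.1 ht.le _ mJ]
    refine integral_congr_ae (Filter.Eventually.of_forall fun ω => ?_)
    simp only [D, α]
    rw [Aint_min_left (fun s => B s ω) u hu.1.le, Aint_min (fun s => B s ω) (cB ω) u t hu.1.le hu.2,
      min_eq_right hu.2]
    rfl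
  have pathE : ∀ ω, ∫ u in (0 : ℝ)..t, E u ω
      = Fy (A B t ω) (M B t ω / A B t ω ^ 2) * A B t ω ^ 2 / 2 := by
    intro ω
    have hA := A_pos hB t ht ω
    have hd : ∀ u ∈ uIcc 0 t, HasDerivAt (fun u =>
        Fy (A B t ω) (M B t ω / A B t ω ^ 2) * (A B t ω * A B u ω - A B u ω ^ 2 / 2)
        + Fq (A B t ω) (M B t ω / A B t ω ^ 2) *
          ((M B t ω / A B t ω ^ 2) * A B u ω - 2 * (M B t ω / A B t ω ^ 2) *
            (A B t ω * A B u ω - A B u ω ^ 2 / 2) / A B t ω)) (E u ω) u := by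
      intro u _
      have h2 : HasDerivAt (fun u => A B u ω) (M B u ω) u :=
        hasDerivAt_Aint (fun s => B s ω) (cB ω) u
      have h3 := (h2.const_mul (A B t ω)).sub ((h2.pow 2).div_const 2)
      have h4 := (h3.const_mul (Fy (A B t ω) (M B t ω / A B t ω ^ 2))).add
        (((h2.const_mul (M B t ω / A B t ω ^ 2)).sub
          ((h3.const_mul (2 * (M B t ω / A B t ω ^ 2))).div_const (A B t ω))).const_mul
          (Fq (A B t ω) (M B t ω / A B t ω ^ 2)))
      refine h4.congr_deriv ?_
      symm
      change M B u ω * (Fy (A B t ω) (M B t ω / A B t ω ^ 2) * _ +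
        Fq (A B t ω) (M B t ω / A B t ω ^ 2) * (M B t ω / A B t ω ^ 2 -
          2 * (M B t ω / A B t ω ^ 2) * _ / _)) = _
      push_cast
      ring
    have hcE : Continuous fun u => E u ω := by
      have h5 := A_cont ω
      have h6 : Continuous fun u => M B u ω := by have := cB ω; unfold M; fun_prop
      simp only [E, Jf]
      fun_prop
    rw [intervalIntegral.integral_eq_sub_of_hasDerivAt hd (hcE.intervalIntegrable _ _)]
    have : A B 0 ω = 0 := Aint_zero _
    rw [this]
    field_simp
    ring
  have pathD : ∀ ω, ∫ u in (0 : ℝ)..t, D u ω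
      = F (α t ω) (Real.exp (B t ω + t - t / 2) / α t ω ^ 2)
        - F (A B t ω) (M B t ω / A B t ω ^ 2) := by
    intro ω
    have hd : ∀ u ∈ uIcc 0 t, HasDerivAt (fun u => F (α u ω)
        (Real.exp (B t ω + u - t / 2) / α u ω ^ 2)) (D u ω) u := by
      intro u hu
      rw [uIcc_of_le ht.le] at hu
      have hp := α_pos ω u hu.1 hu.2
      have h1 := α_deriv ω u
      have h2 : HasDerivAt (fun u => Real.exp (B t ω + u - t / 2))
          (Real.exp (B t ω + u - t / 2) * 1) u :=
        (((hasDerivAt_id u).const_add (B t ω)).sub_const (t / 2)).exp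
      have hp2 : α u ω ^ 2 ≠ 0 := by positivity
      have h3 : HasDerivAt (fun v => Real.exp (B t ω + v - t / 2) / α v ω ^ 2)
          (Real.exp (B t ω + u - t / 2) / α u ω ^ 2 - 2 * (Real.exp (B t ω + u - t / 2) / α u ω ^ 2)
            * (Real.exp u * (A B t ω - A B u ω)) / α u ω) u := by
        have h3' := h2.fun_div (h1.fun_pow 2) hp2
        refine h3'.congr_deriv ?_
        push_cast
        field_simp
      have h4 := hD (fun v => α v ω) (fun v => Real.exp (B t ω + v - t / 2) / α v ω ^ 2) _ _ u
        hp h1 h3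
      have e : α u ω - Aint (fun s => B s ω + s) u = Real.exp u * (A B t ω - A B u ω) := by
        simp only [α]; ring
      refine h4.congr_deriv ?_
      simp only [D, Jf, e]
    have hintg : IntervalIntegrable (fun u => D u ω) volume 0 t := by
      rw [intervalIntegrable_iff, uIoc_of_le ht.le]
      refine Integrable.mono' (integrable_const (2 * K))
        (D_meas.comp (measurable_id.prodMk measurable_const)).aestronglyMeasurable ?_
      filter_upwards [ae_restrict_mem measurableSet_Ioc] with u hu
      exact D_bound u ω hu.1.le hu.2
    rw [intervalIntegral.integral_eq_sub_of_hasDerivAt hd hintg]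
    have : α 0 ω = A B t ω := by
      have : A B 0 ω = 0 := Aint_zero _
      simp [α, Aint_zero, this]
    rw [this]
    simp [M]
  -- Cameron-Martin at the terminal time
  have mF : Measurable fun p : ℝ × ℝ × ℝ => F p.2.2 (Real.exp (p.1 - t / 2) / p.2.2 ^ 2) := by
    have h1 : Measurable fun p : ℝ × ℝ × ℝ =>
      (p.2.2, Real.exp (p.1 - t / 2) / p.2.2 ^ 2) := by fun_prop
    exact hm.comp h1
  have hT := cm hB t t ht ht.le _ mF
  simp only [min_self] at hT
  have hαt : ∀ ω, Aint (fun s => B s ω + min s t) t = α t ω := fun ω =>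
    Aint_min (fun s => B s ω) (cB ω) t t ht.le le_rfl
  simp only [hαt] at hT
  have mA := meas_A' hB t
  have mM := meas_M hB t
  have hFA : Measurable fun ω => F (A B t ω) (M B t ω / A B t ω ^ 2) :=
    hm.comp (mA.prodMk (mM.div (mA.pow_const 2)))
  have i1 : Integrable (fun ω => F (A B t ω) (M B t ω / A B t ω ^ 2)) P := by
    refine Integrable.mono' (integrable_const K) hFA.aestronglyMeasurable
      (Filter.Eventually.of_forall fun ω => ?_)
    have := A_pos hB t ht ω
    exact hK _ _ this (div_pos (Real.exp_pos _) (by positivity))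
  have i2 : Integrable (fun ω => M B t ω * F (A B t ω) (M B t ω / A B t ω ^ 2)) P := by
    refine Integrable.mono' ((integrable_M hB t ht).const_mul K)
      (mM.mul hFA).aestronglyMeasurable (Filter.Eventually.of_forall fun ω => ?_)
    have := A_pos hB t ht ω
    rw [Real.norm_eq_abs, abs_mul, abs_of_pos (show 0 < M B t ω from Real.exp_pos _), mul_comm]
    gcongr
    · exact (Real.exp_pos _).le
    · exact hK _ _ this (div_pos (Real.exp_pos _) (by positivity))
  have i3 : Integrable (fun ω => F (α t ω) (Real.exp (B t ω + t - t / 2) / α t ω ^ 2)) P := by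
    have mα := α_meas t
    have mBt := mB t
    refine Integrable.mono' (integrable_const K)
      (hm.comp (mα.prodMk (by fun_prop : Measurable fun ω =>
        Real.exp (B t ω + t - t / 2) / α t ω ^ 2))).aestronglyMeasurable
      (Filter.Eventually.of_forall fun ω => ?_)
    have := α_pos ω t ht.le le_rfl
    exact hK _ _ this (div_pos (Real.exp_pos _) (by positivity))
  rw [integral_congr_ae (Filter.Eventually.of_forall fun ω => (pathE ω).symm), ← swapE, ← hDE,
    swapD, integral_congr_ae (Filter.Eventually.of_forall pathD), integral_sub i3 i1, ← hT]
  change _ = ∫ ω, M B t ω * F (A B t ω) (M B t ω / A B t ω ^ 2) ∂P - _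
  rw [← integral_sub i2 i1]
  refine integral_congr_ae (Filter.Eventually.of_forall fun ω => ?_)
  ring

/-- exponential factor -/
def Ex (ε s y q : ℝ) : ℝ := Real.exp (-(ε * q ^ 2) - 2 * s + 2 * s * q * y ^ 2 / (1 + s * y))

/-- interpolating family -/
def Ff (h : ℝ → ℝ) (ε s y q : ℝ) : ℝ := h (y / (1 + s * y)) * Ex ε s y q

/-- y-derivative -/
def Ffy (h h' : ℝ → ℝ) (ε s y q : ℝ) : ℝ :=
  (h' (y / (1 + s * y)) / (1 + s * y) ^ 2
    + h (y / (1 + s * y)) * (2 * s * q * (2 * y + s * y ^ 2) / (1 + s * y) ^ 2)) * Ex ε s y q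

/-- q-derivative -/
def Ffq (h : ℝ → ℝ) (ε s y q : ℝ) : ℝ :=
  h (y / (1 + s * y)) * (-(2 * ε * q) + 2 * s * y ^ 2 / (1 + s * y)) * Ex ε s y q

/-- s-derivative -/
def Ffs (h h' : ℝ → ℝ) (ε s y q : ℝ) : ℝ :=
  (-(h' (y / (1 + s * y)) * y ^ 2 / (1 + s * y) ^ 2)
    + h (y / (1 + s * y)) * (-2 + 2 * q * y ^ 2 / (1 + s * y) ^ 2)) * Ex ε s y q

lemma Ff_deriv (h h' : ℝ → ℝ) (hh : ∀ x, HasDerivAt h (h' x) x) (ε : ℝ)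
    (σ y q : ℝ → ℝ) (σ' y' q' u : ℝ) (hp : 0 < 1 + σ u * y u)
    (hσ : HasDerivAt σ σ' u) (hy : HasDerivAt y y' u) (hq : HasDerivAt q q' u) :
    HasDerivAt (fun v => Ff h ε (σ v) (y v) (q v))
      (Ffs h h' ε (σ u) (y u) (q u) * σ' + Ffy h h' ε (σ u) (y u) (q u) * y'
        + Ffq h ε (σ u) (y u) (q u) * q') u := by
  have hp' := hp.ne'
  have d1 : HasDerivAt (fun v => 1 + σ v * y v) (σ' * y u + σ u * y') u :=
    (hσ.fun_mul hy).const_add 1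
  have d2 := hy.fun_div d1 hp'
  have d3 := (hh (y u / (1 + σ u * y u))).comp u d2
  have d4 := ((((hσ.const_mul 2).fun_mul hq).fun_mul (hy.fun_pow 2)).fun_div d1 hp')
  have d5 := ((((hq.fun_pow 2).const_mul ε).fun_neg.fun_sub (hσ.const_mul 2)).fun_add d4).exp
  have d6 := d3.fun_mul d5
  refine d6.congr_deriv ?_
  simp only [Ffs, Ffy, Ffq, Function.comp, Ex]
  generalize h' (y u / (1 + σ u * y u)) = k'
  generalize h (y u / (1 + σ u * y u)) = k
  generalize Real.exp _ = e
  push_cast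
  field_simp
  ring

lemma Ff_key (h h' : ℝ → ℝ) (ε s y q : ℝ) (hp : 0 < 1 + s * y) :
    Ffs h h' ε s y q = 2 * (Ff h ε s y q * (q * y ^ 2 - 1)) - 2 * (Ffy h h' ε s y q * y ^ 2 / 2) := by
  simp only [Ffs, Ffy, Ff]
  have hp' := hp.ne'
  generalize h' (y / (1 + s * y)) = k'
  generalize h (y / (1 + s * y)) = k
  generalize Ex ε s y q = e
  have e1 : s * y = (1 + s * y) - 1 := by ring
  have e2 : q * y ^ 2 * (1 + 2 * (s * y) + (s * y) ^ 2) / (1 + s * y) ^ 2 = q * y ^ 2 := by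
    rw [div_eq_iff (by positivity)]; ring
  linear_combination (2 * k * e) * e2

lemma Ex_bound (ε s y q a Y : ℝ) (hε : 0 < ε) (ha : 0 < a) (hs : 0 ≤ s) (hsa : s ≤ 1 / a)
    (hy : 0 < y) (hq : 0 < q) (hY : y ≤ Y) :
    (1 + q) ^ 2 * Ex ε s y q ≤ Real.exp ((2 * Y ^ 2 / a + 2) ^ 2 / (4 * ε)) := by
  have h1 : (1 + q) ^ 2 ≤ Real.exp (2 * q) := by
    rw [two_mul, Real.exp_add, ← sq]
    have := Real.add_one_le_exp q
    gcongr
    linarith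
  calc (1 + q) ^ 2 * Ex ε s y q ≤ Real.exp (2 * q) * Ex ε s y q :=
        mul_le_mul_of_nonneg_right h1 (Real.exp_pos _).le
    _ ≤ _ := by
      rw [Ex, ← Real.exp_add]
      gcongr
      have h2 : 2 * s * q * y ^ 2 / (1 + s * y) ≤ 2 * (1 / a) * q * Y ^ 2 := by
        have : 0 ≤ s * y := by positivity
        calc _ ≤ 2 * s * q * y ^ 2 := div_le_self (by positivity) (by linarith)
          _ ≤ _ := by gcongr
      have h3 : (2 * Y ^ 2 / a + 2) * q - ε * q ^ 2 ≤ (2 * Y ^ 2 / a + 2) ^ 2 / (4 * ε) := by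
        rw [le_div_iff₀ (by positivity)]
        nlinarith [sq_nonneg (2 * ε * q - (2 * Y ^ 2 / a + 2))]
      have h4 : 2 * (1 / a) * q * Y ^ 2 = 2 * Y ^ 2 / a * q := by ring
      nlinarith

set_option maxHeartbeats 4000000 in
lemma Ff_bounds (h h' : ℝ → ℝ) (a b H ε : ℝ) (hε : 0 < ε) (ha : 0 < a) (hb : 0 < b) (hba : b < a)
    (h0 : ∀ x, b ≤ x → h x = 0) (h0' : ∀ x, b ≤ x → h' x = 0)
    (hH : ∀ x, 0 < x → |h x| ≤ H) (hH' : ∀ x, 0 < x → |h' x| ≤ H) :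
    ∃ K, ∀ s y q, 0 ≤ s → s ≤ 1 / a → 0 < y → 0 < q →
      |Ff h ε s y q| ≤ K ∧ |y * Ffy h h' ε s y q| ≤ K ∧ |q * Ffq h ε s y q| ≤ K ∧
      |Ffs h h' ε s y q| ≤ K := by
  have hHn : 0 ≤ H := (abs_nonneg _).trans (hH 1 one_pos)
  set Y := a * b / (a - b) with hYdef
  have hab : 0 < a - b := by linarith
  have hYp : 0 < Y := by positivity
  set E0 := Real.exp ((2 * Y ^ 2 / a + 2) ^ 2 / (4 * ε)) with hE0
  set W := 3 + Y + 4 * Y ^ 2 / a + 2 * ε + 2 * Y ^ 2 / a + 3 * Y ^ 2 with hW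
  have hWp : 0 ≤ W := by positivity
  refine ⟨H * W * E0, fun s y q hs hsa hy hq => ?_⟩
  have hsy : 0 ≤ s * y := by positivity
  have hD : 0 < 1 + s * y := by positivity
  have hD1 : 1 ≤ 1 + s * y := by linarith
  have hx : 0 < y / (1 + s * y) := by positivity
  have hKn : 0 ≤ H * W * E0 := by positivity
  by_cases hxb : b ≤ y / (1 + s * y)
  · simp only [Ff, Ffy, Ffq, Ffs, h0 _ hxb, h0' _ hxb]
    simp [hKn]
  have hyY : y ≤ Y := by
    push Not at hxb
    rw [div_lt_iff₀ hD] at hxb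
    rw [hYdef, le_div_iff₀ hab]
    have : s * a ≤ 1 := by rwa [le_div_iff₀ ha] at hsa
    have : b * y * (s * a) ≤ b * y * 1 := by gcongr
    nlinarith
  have hE := Ex_bound ε s y q a Y hε ha hs hsa hy hq hyY
  have k := hH _ hx
  have k' := hH' _ hx
  have hEp : 0 < Ex ε s y q := Real.exp_pos _
  -- general principle
  have gen : ∀ X : ℝ, |X| ≤ H * (W * (1 + q) ^ 2) → |X * Ex ε s y q| ≤ H * W * E0 := by
    intro X hX
    rw [abs_mul, abs_of_pos hEp]
    calc |X| * Ex ε s y q ≤ H * (W * (1 + q) ^ 2) * Ex ε s y q := by gcongr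
      _ = H * W * ((1 + q) ^ 2 * Ex ε s y q) := by ring
      _ ≤ H * W * E0 := by gcongr
  have gen2 : ∀ α β γ δ : ℝ, |α| ≤ H → |β| ≤ H → |γ| + |δ| ≤ W * (1 + q) ^ 2 →
      |α * γ + β * δ| ≤ H * (W * (1 + q) ^ 2) := by
    intro α β γ δ h1 h2 h3
    calc |α * γ + β * δ| ≤ |α * γ| + |β * δ| := abs_add_le _ _
      _ = |α| * |γ| + |β| * |δ| := by rw [abs_mul, abs_mul]
      _ ≤ H * |γ| + H * |δ| := by gcongr
      _ = H * (|γ| + |δ|) := by ring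
      _ ≤ _ := by gcongr
  have hq1 : 1 ≤ (1 + q) ^ 2 := by nlinarith
  have hq2 : q ≤ (1 + q) ^ 2 := by nlinarith
  have hq3 : q ^ 2 ≤ (1 + q) ^ 2 := by nlinarith
  have hW1 : ∀ c0 c1 c2 : ℝ, 0 ≤ c0 → 0 ≤ c1 → 0 ≤ c2 → c0 + c1 + c2 ≤ W →
      c0 + c1 * q + c2 * q ^ 2 ≤ W * (1 + q) ^ 2 := by
    intro c0 c1 c2 g0 g1 g2 g
    calc c0 + c1 * q + c2 * q ^ 2 ≤ c0 * (1 + q) ^ 2 + c1 * (1 + q) ^ 2 + c2 * (1 + q) ^ 2 := by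
          gcongr
          nlinarith
      _ = (c0 + c1 + c2) * (1 + q) ^ 2 := by ring
      _ ≤ _ := by gcongr
  have hD2 : 1 ≤ (1 + s * y) ^ 2 := by nlinarith
  have hYa : 0 ≤ Y ^ 2 / a := by positivity
  have hY2 : 0 ≤ Y ^ 2 := by positivity
  have e4 : 4 * Y ^ 2 / a = 4 * (Y ^ 2 / a) := by ring
  have e2 : 2 * Y ^ 2 / a = 2 * (Y ^ 2 / a) := by ring
  refine ⟨?_, ?_, ?_, ?_⟩
  · refine gen _ ?_
    have := gen2 _ _ 1 0 k k ?_
    · simpa using this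
    · have := hW1 1 0 0 (by simp) le_rfl le_rfl (by rw [hW, e4, e2]; linarith)
      simpa using this
  · have e : y * Ffy h h' ε s y q = (h' (y / (1 + s * y)) * (y / (1 + s * y) ^ 2)
        + h (y / (1 + s * y)) * (y * (2 * s * q * (2 * y + s * y ^ 2) / (1 + s * y) ^ 2)))
        * Ex ε s y q := by
      simp only [Ffy]; ring
    rw [e]
    refine gen _ (gen2 _ _ _ _ k' k ?_)
    rw [abs_of_nonneg (by positivity), abs_of_nonneg (by positivity)]
    have b1 : y / (1 + s * y) ^ 2 ≤ Y := (div_le_self hy.le hD2).trans hyY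
    have b2 : y * (2 * s * q * (2 * y + s * y ^ 2) / (1 + s * y) ^ 2) ≤ 4 * (Y ^ 2 / a) * q := by
      have c1 : (2 * y + s * y ^ 2) / (1 + s * y) ^ 2 ≤ 2 * y := by
        rw [div_le_iff₀ (by positivity)]
        have : 0 ≤ y * (s * y) := by positivity
        have : 0 ≤ y * (s * y) ^ 2 := by positivity
        nlinarith
      calc _ = 2 * s * q * y * ((2 * y + s * y ^ 2) / (1 + s * y) ^ 2) := by ring
        _ ≤ 2 * s * q * y * (2 * y) := by gcongr
        _ = 4 * s * y ^ 2 * q := by ring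
        _ ≤ 4 * (1 / a) * Y ^ 2 * q := by gcongr
        _ = _ := by ring
    have := hW1 Y (4 * (Y ^ 2 / a)) 0 hYp.le (by positivity) le_rfl (by rw [hW, e4, e2]; linarith)
    linarith
  · have e : q * Ffq h ε s y q = (h (y / (1 + s * y)) * (-(2 * ε * q ^ 2))
        + h (y / (1 + s * y)) * (2 * s * y ^ 2 / (1 + s * y) * q)) * Ex ε s y q := by
      simp only [Ffq]; ring
    rw [e]
    refine gen _ (gen2 _ _ _ _ k k ?_)
    rw [abs_neg, abs_of_nonneg (by positivity), abs_of_nonneg (by positivity)]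
    have b2 : 2 * s * y ^ 2 / (1 + s * y) * q ≤ 2 * (Y ^ 2 / a) * q := by
      calc _ ≤ 2 * s * y ^ 2 * q := by gcongr; exact div_le_self (by positivity) hD1
        _ ≤ 2 * (1 / a) * Y ^ 2 * q := by gcongr
        _ = _ := by ring
    have := hW1 0 (2 * (Y ^ 2 / a)) (2 * ε) le_rfl (by positivity) (by positivity)
      (by rw [hW, e4, e2]; linarith)
    linarith
  · have e : Ffs h h' ε s y q = (h' (y / (1 + s * y)) * (-(y ^ 2 / (1 + s * y) ^ 2))
        + h (y / (1 + s * y)) * (-2 + 2 * q * y ^ 2 / (1 + s * y) ^ 2)) * Ex ε s y q := by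
      simp only [Ffs]; ring
    rw [e]
    refine gen _ (gen2 _ _ _ _ k' k ?_)
    have b0 : |(-2 : ℝ) + 2 * q * y ^ 2 / (1 + s * y) ^ 2| ≤ 2 + 2 * q * y ^ 2 / (1 + s * y) ^ 2 := by
      refine (abs_add_le _ _).trans ?_
      rw [abs_neg, abs_of_pos (by norm_num : (0 : ℝ) < 2),
        abs_of_nonneg (a := 2 * q * y ^ 2 / (1 + s * y) ^ 2) (by positivity)]
    rw [abs_neg, abs_of_nonneg (by positivity)]
    have b1 : y ^ 2 / (1 + s * y) ^ 2 ≤ Y ^ 2 := (div_le_self (by positivity) hD2).trans (by gcongr)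
    have b2 : 2 * q * y ^ 2 / (1 + s * y) ^ 2 ≤ 2 * Y ^ 2 * q := by
      calc _ ≤ 2 * q * y ^ 2 := div_le_self (by positivity) hD2
        _ ≤ 2 * q * Y ^ 2 := by gcongr
        _ = _ := by ring
    have := hW1 (Y ^ 2 + 2) (2 * Y ^ 2) 0 (by positivity) (by positivity) le_rfl
      (by rw [hW, e4, e2]; linarith)
    linarith

lemma Ff_const (hB : IsBrownianMotion P B) (t : ℝ) (ht : 0 < t)
    (h h' : ℝ → ℝ) (a b H ε : ℝ) (hε : 0 < ε) (ha : 0 < a) (hb : 0 < b) (hba : b < a)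
    (hh : ∀ x, HasDerivAt h (h' x) x) (mh : Measurable h) (mh' : Measurable h')
    (h0 : ∀ x, b ≤ x → h x = 0) (h0' : ∀ x, b ≤ x → h' x = 0)
    (hH : ∀ x, 0 < x → |h x| ≤ H) (hH' : ∀ x, 0 < x → |h' x| ≤ H) :
    Integrable (fun ω => Ff h ε (1 / a) (A B t ω) (M B t ω / A B t ω ^ 2)) P ∧
    Integrable (fun ω => Ff h ε 0 (A B t ω) (M B t ω / A B t ω ^ 2)) P ∧
    ∫ ω, Ff h ε (1 / a) (A B t ω) (M B t ω / A B t ω ^ 2) ∂P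
      = ∫ ω, Ff h ε 0 (A B t ω) (M B t ω / A B t ω ^ 2) ∂P := by
  have := hB.isProbabilityMeasure
  obtain ⟨K, hK⟩ := Ff_bounds h h' a b H ε hε ha hb hba h0 h0' hH hH'
  have mA := meas_A' hB t
  have mM := meas_M hB t
  have hA := A_pos hB t ht
  have hQ : ∀ ω, 0 < M B t ω / A B t ω ^ 2 := fun ω => by
    have := hA ω
    exact div_pos (Real.exp_pos _) (by positivity)
  have ha' : 0 < 1 / a := by positivity
  have m3 : Measurable fun p : ℝ × ℝ × ℝ => Ff h ε p.1 p.2.1 p.2.2 := by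
    simp only [Ff, Ex]; fun_prop
  have m3y : Measurable fun p : ℝ × ℝ × ℝ => Ffy h h' ε p.1 p.2.1 p.2.2 := by
    simp only [Ffy, Ex]; fun_prop
  have m3q : Measurable fun p : ℝ × ℝ × ℝ => Ffq h ε p.1 p.2.1 p.2.2 := by
    simp only [Ffq, Ex]; fun_prop
  have m3s : Measurable fun p : ℝ × ℝ × ℝ => Ffs h h' ε p.1 p.2.1 p.2.2 := by
    simp only [Ffs, Ex]; fun_prop
  have mAQ : Measurable fun ω => (A B t ω, M B t ω / A B t ω ^ 2) :=
    mA.prodMk (mM.div (mA.pow_const 2))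
  have iF : ∀ s, 0 ≤ s → s ≤ 1 / a →
      Integrable (fun ω => Ff h ε s (A B t ω) (M B t ω / A B t ω ^ 2)) P := by
    intro s hs hsa
    refine Integrable.mono' (integrable_const K)
      (m3.comp (measurable_const.prodMk mAQ)).aestronglyMeasurable
      (Filter.Eventually.of_forall fun ω => ?_)
    exact (hK s _ _ hs hsa (hA ω) (hQ ω)).1
  have iFs : ∀ s, 0 ≤ s → s ≤ 1 / a →
      Integrable (fun ω => Ffs h h' ε s (A B t ω) (M B t ω / A B t ω ^ 2)) P := by
    intro s hs hsa
    refine Integrable.mono' (integrable_const K)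
      (m3s.comp (measurable_const.prodMk mAQ)).aestronglyMeasurable
      (Filter.Eventually.of_forall fun ω => ?_)
    exact (hK s _ _ hs hsa (hA ω) (hQ ω)).2.2.2
  have zero : ∀ s, 0 ≤ s → s ≤ 1 / a →
      ∫ ω, Ffs h h' ε s (A B t ω) (M B t ω / A B t ω ^ 2) ∂P = 0 := by
    intro s hs hsa
    have hib := ibp hB t ht (Ff h ε s) (Ffy h h' ε s) (Ffq h ε s) K
      (m3.comp (measurable_const.prodMk measurable_id))
      (m3y.comp (measurable_const.prodMk measurable_id))
      (m3q.comp (measurable_const.prodMk measurable_id))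
      (fun y q hy hq => (hK s y q hs hsa hy hq).1)
      (fun y q hy hq => (hK s y q hs hsa hy hq).2.1)
      (fun y q hy hq => (hK s y q hs hsa hy hq).2.2.1)
      (fun y q y' q' u hu hy hq => by
        have := Ff_deriv h h' hh ε (fun _ => s) y q 0 y' q' u (by positivity)
          (hasDerivAt_const u s) hy hq
        refine this.congr_deriv ?_
        ring)
    have i1 : Integrable (fun ω => Ff h ε s (A B t ω) (M B t ω / A B t ω ^ 2) * (M B t ω - 1)) P := by
      refine ((integrable_M hB t ht).sub (integrable_const 1)).bdd_mul (c := K)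
        (m3.comp (measurable_const.prodMk mAQ)).aestronglyMeasurable
        (Filter.Eventually.of_forall fun ω => ?_)
      exact (hK s _ _ hs hsa (hA ω) (hQ ω)).1
    have key : ∀ ω, Ffs h h' ε s (A B t ω) (M B t ω / A B t ω ^ 2)
        = 2 * (Ff h ε s (A B t ω) (M B t ω / A B t ω ^ 2) * (M B t ω - 1))
          - 2 * (Ffy h h' ε s (A B t ω) (M B t ω / A B t ω ^ 2) * A B t ω ^ 2 / 2) := by
      intro ω
      have := hA ω
      rw [Ff_key h h' ε s _ _ (by positivity), div_mul_cancel₀ _ (by positivity)]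
    have i2 : Integrable (fun ω =>
        Ffy h h' ε s (A B t ω) (M B t ω / A B t ω ^ 2) * A B t ω ^ 2 / 2) P := by
      refine (i1.sub ((iFs s hs hsa).const_mul (1 / 2))).congr
        (Filter.Eventually.of_forall fun ω => ?_)
      have := key ω
      simp only [Pi.sub_apply]
      linarith
    rw [integral_congr_ae (Filter.Eventually.of_forall key),
      integral_sub (i1.const_mul 2) (i2.const_mul 2), integral_const_mul, integral_const_mul, hib,
      sub_self]
  refine ⟨iF _ ha'.le le_rfl, iF _ le_rfl ha'.le, ?_⟩
  let D : ℝ → Ω → ℝ := fun s ω => Ffs h h' ε s (A B t ω) (M B t ω / A B t ω ^ 2)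
  have D_meas : Measurable (Function.uncurry D) :=
    m3s.comp (measurable_fst.prodMk (mAQ.comp measurable_snd))
  have D_bound : ∀ s ω, 0 ≤ s → s ≤ 1 / a → |D s ω| ≤ K := fun s ω hs hsa =>
    (hK s _ _ hs hsa (hA ω) (hQ ω)).2.2.2
  have ae_mem : ∀ᵐ p ∂((volume.restrict (uIoc 0 (1 / a))).prod P), p.1 ∈ Ioc 0 (1 / a) := by
    rw [uIoc_of_le ha'.le]
    have h1 : ∀ᵐ u ∂(volume.restrict (Ioc 0 (1 / a))), u ∈ Ioc 0 (1 / a) :=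
      ae_restrict_mem measurableSet_Ioc
    exact Measure.quasiMeasurePreserving_fst.ae h1
  have D_int : Integrable (Function.uncurry D) ((volume.restrict (uIoc 0 (1 / a))).prod P) := by
    have : IsFiniteMeasure (volume.restrict (uIoc 0 (1 / a))) := by
      rw [uIoc_of_le ha'.le]; infer_instance
    refine Integrable.mono' (integrable_const K) D_meas.aestronglyMeasurable ?_
    filter_upwards [ae_mem] with p hp
    exact D_bound p.1 p.2 hp.1.le hp.2
  have swapD := intervalIntegral_integral_swap D_int
  have z : ∫ s in (0 : ℝ)..(1 / a), ∫ ω, D s ω ∂P = 0 := by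
    rw [intervalIntegral.integral_congr_ae (g := fun _ => (0 : ℝ))
      (Filter.Eventually.of_forall fun u hu => ?_)]
    · simp
    · rw [uIoc_of_le ha'.le] at hu
      exact zero u hu.1.le hu.2
  have path : ∀ ω, ∫ s in (0 : ℝ)..(1 / a), D s ω
      = Ff h ε (1 / a) (A B t ω) (M B t ω / A B t ω ^ 2)
        - Ff h ε 0 (A B t ω) (M B t ω / A B t ω ^ 2) := by
    intro ω
    have hd : ∀ u ∈ uIcc 0 (1 / a), HasDerivAt (fun s =>
        Ff h ε s (A B t ω) (M B t ω / A B t ω ^ 2)) (D u ω) u := by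
      intro u hu
      rw [uIcc_of_le ha'.le] at hu
      have := hA ω
      have hu0 := hu.1
      have := Ff_deriv h h' hh ε (fun s => s) (fun _ => A B t ω) (fun _ => M B t ω / A B t ω ^ 2)
        1 0 0 u (by positivity) (hasDerivAt_id u) (hasDerivAt_const u _) (hasDerivAt_const u _)
      refine this.congr_deriv ?_
      simp only [D]
      ring
    have hintg : IntervalIntegrable (fun u => D u ω) volume 0 (1 / a) := by
      rw [intervalIntegrable_iff, uIoc_of_le ha'.le]
      refine Integrable.mono' (integrable_const K)
        (D_meas.comp (measurable_id.prodMk measurable_const)).aestronglyMeasurable ?_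
      filter_upwards [ae_restrict_mem measurableSet_Ioc] with u hu
      exact D_bound u ω hu.1.le hu.2
    exact intervalIntegral.integral_eq_sub_of_hasDerivAt hd hintg
  rw [swapD, integral_congr_ae (Filter.Eventually.of_forall path),
    integral_sub (iF _ ha'.le le_rfl) (iF _ le_rfl ha'.le)] at z
  linarith

/-- smooth approximation of the hinge function -/
def hf (b δ x : ℝ) : ℝ := max (b - x) 0 ^ 2 / (max (b - x) 0 + δ)

/-- its derivative -/
def hf' (b δ x : ℝ) : ℝ :=
  -((max (b - x) 0 ^ 2 + 2 * max (b - x) 0 * δ) / (max (b - x) 0 + δ) ^ 2)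

lemma hf_deriv (b δ : ℝ) (hδ : 0 < δ) (x : ℝ) : HasDerivAt (hf b δ) (hf' b δ x) x := by
  rcases lt_trichotomy x b with hx | hx | hx
  · have h1 : HasDerivAt (fun y => b - y) (-1) x := by
      simpa using (hasDerivAt_id x).const_sub b
    have hp : 0 < b - x := by linarith
    have h2 := (h1.fun_pow 2).fun_div (h1.add_const δ) (by positivity)
    have e : hf b δ =ᶠ[nhds x] fun y => (b - y) ^ 2 / (b - y + δ) := by
      filter_upwards [Iio_mem_nhds hx] with y hy
      simp only [mem_Iio] at hy
      rw [hf, max_eq_left (by linarith)]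
    refine (h2.congr_of_eventuallyEq e).congr_deriv ?_
    rw [hf', max_eq_left hp.le]
    push_cast
    field_simp
    ring
  · subst hx
    have h0 : hf' x δ x = 0 := by simp [hf']
    rw [h0]
    have hO : hf x δ =O[nhds x] fun y => ‖y - x‖ ^ 2 := by
      refine Asymptotics.IsBigO.of_bound (1 / δ) (Filter.Eventually.of_forall fun y => ?_)
      rw [Real.norm_eq_abs, Real.norm_eq_abs, Real.norm_eq_abs, hf]
      have hR : 0 ≤ max (x - y) 0 := le_max_right _ _
      rw [abs_of_nonneg (by positivity), abs_of_nonneg (by positivity), sq_abs,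
        one_div_mul_eq_div]
      have h3 : max (x - y) 0 ^ 2 ≤ (y - x) ^ 2 := by
        rcases max_cases (x - y) 0 with h | h <;> rw [h.1]
        · nlinarith
        · nlinarith [sq_nonneg (y - x)]
      gcongr
      linarith
    have := (hO.hasFDerivAt (𝕜 := ℝ) one_lt_two).hasDerivAt
    simpa using this
  · have e : hf b δ =ᶠ[nhds x] fun y => 0 := by
      filter_upwards [Ioi_mem_nhds hx] with y hy
      simp only [mem_Ioi] at hy
      rw [hf, max_eq_right (by linarith)]
      simp
    refine ((hasDerivAt_const x (0 : ℝ)).congr_of_eventuallyEq e).congr_deriv ?_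
    rw [hf', max_eq_right (by linarith)]
    simp

lemma hf_zero (b δ x : ℝ) (h : b ≤ x) : hf b δ x = 0 := by
  rw [hf, max_eq_right (by linarith)]; simp

lemma hf'_zero (b δ x : ℝ) (h : b ≤ x) : hf' b δ x = 0 := by
  rw [hf', max_eq_right (by linarith)]; simp

lemma hf_nonneg (b δ x : ℝ) (hδ : 0 < δ) : 0 ≤ hf b δ x := by
  have hR : 0 ≤ max (b - x) 0 := le_max_right _ _
  rw [hf]; positivity

lemma hf_le (b δ x : ℝ) (hδ : 0 < δ) : hf b δ x ≤ max (b - x) 0 := by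
  have hR : 0 ≤ max (b - x) 0 := le_max_right _ _
  rw [hf, div_le_iff₀ (by positivity)]
  nlinarith

lemma hf_ge (b δ x : ℝ) (hδ : 0 < δ) : max (b - x) 0 - δ ≤ hf b δ x := by
  have hR : 0 ≤ max (b - x) 0 := le_max_right _ _
  rw [hf, le_div_iff₀ (by positivity)]
  nlinarith

lemma hf'_abs (b δ x : ℝ) (hδ : 0 < δ) : |hf' b δ x| ≤ 1 := by
  have hR : 0 ≤ max (b - x) 0 := le_max_right _ _
  rw [hf', abs_neg, abs_of_nonneg (by positivity), div_le_one (by positivity)]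
  nlinarith

lemma hf_mono (b₁ b₂ δ₁ δ₂ x : ℝ) (hδ : 0 < δ₂) (h : δ₂ ≤ δ₁) (hb : b₁ ≤ b₂) :
    hf b₁ δ₁ x ≤ hf b₂ δ₂ x := by
  have hR : 0 ≤ max (b₁ - x) 0 := le_max_right _ _
  have hRR : max (b₁ - x) 0 ≤ max (b₂ - x) 0 := max_le_max_right _ (by linarith)
  have hδ1 : 0 < δ₁ := by linarith
  have hR2 : 0 ≤ max (b₂ - x) 0 := le_max_right _ _
  rw [hf, hf, div_le_div_iff₀ (by positivity) (by positivity)]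
  generalize max (b₁ - x) 0 = r at *
  generalize max (b₂ - x) 0 = R at *
  have h1 : r * R * r ≤ r * R * R := by gcongr
  have h2 : r ^ 2 * δ₂ ≤ R ^ 2 * δ₁ := by gcongr
  nlinarith

/-- limit of the interpolating family -/
def Gf (a s y q : ℝ) : ℝ :=
  max (a - y / (1 + s * y)) 0 * Real.exp (-(2 * s) + 2 * s * q * y ^ 2 / (1 + s * y))

/-- approximants -/
def Fn (a : ℝ) (n : ℕ) (s y q : ℝ) : ℝ :=
  Ff (hf (a - a / (n + 2)) (a / (n + 2))) (1 / (n + 1)) s y q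

lemma Fn_nonneg (a : ℝ) (ha : 0 < a) (n : ℕ) (s y q : ℝ) : 0 ≤ Fn a n s y q :=
  mul_nonneg (hf_nonneg _ _ _ (by positivity)) (Real.exp_pos _).le

lemma Fn_mono (a : ℝ) (ha : 0 < a) (s y q : ℝ) : Monotone fun n => Fn a n s y q := by
  intro n m hnm
  have hc : (n : ℝ) ≤ m := by exact_mod_cast hnm
  have h1 : a / ((m : ℝ) + 2) ≤ a / (n + 2) := by gcongr
  have h2 : 1 / ((m : ℝ) + 1) ≤ 1 / (n + 1) := by gcongr
  simp only [Fn, Ff, Ex]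
  refine mul_le_mul (hf_mono _ _ _ _ _ (by positivity) h1 (by linarith)) ?_ (Real.exp_pos _).le
    (hf_nonneg _ _ _ (by positivity))
  gcongr

lemma Fn_tendsto (a : ℝ) (ha : 0 < a) (s y q : ℝ) :
    Filter.Tendsto (fun n => Fn a n s y q) Filter.atTop (nhds (Gf a s y q)) := by
  have t1 : Filter.Tendsto (fun n : ℕ => a / ((n : ℝ) + 2)) Filter.atTop (nhds 0) :=
    Filter.Tendsto.div_atTop tendsto_const_nhds
      (Filter.tendsto_atTop_add_const_right _ _ tendsto_natCast_atTop_atTop)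
  have t2 : Filter.Tendsto (fun n : ℕ => 1 / ((n : ℝ) + 1)) Filter.atTop (nhds 0) :=
    tendsto_one_div_add_atTop_nhds_zero_nat
  simp only [Fn, Ff, Ex, Gf]
  refine Filter.Tendsto.mul ?_ ?_
  · generalize y / (1 + s * y) = x
    have t3 : Filter.Tendsto (fun n : ℕ => max (a - a / ((n : ℝ) + 2) - x) 0) Filter.atTop
        (nhds (max (a - x) 0)) := by
      have : Filter.Tendsto (fun n : ℕ => a - a / ((n : ℝ) + 2) - x) Filter.atTop
        (nhds (a - x)) := by simpa using (t1.const_sub a).sub_const x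
      exact this.max tendsto_const_nhds
    refine tendsto_of_tendsto_of_tendsto_of_le_of_le (by simpa using t3.sub t1) t3
      (fun n => hf_ge _ _ _ (by positivity)) (fun n => hf_le _ _ _ (by positivity))
  · refine (Real.continuous_exp.tendsto _).comp ?_
    have : Filter.Tendsto (fun n : ℕ => -(1 / ((n : ℝ) + 1) * q ^ 2) - 2 * s
      + 2 * s * q * y ^ 2 / (1 + s * y)) Filter.atTop
      (nhds (-(0 * q ^ 2) - 2 * s + 2 * s * q * y ^ 2 / (1 + s * y))) :=
      ((((t2.mul_const _).neg).sub_const _).add_const _)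
    simpa using this

lemma Fn_const (hB : IsBrownianMotion P B) (t a : ℝ) (ht : 0 < t) (ha : 0 < a) (n : ℕ) :
    Integrable (fun ω => Fn a n (1 / a) (A B t ω) (M B t ω / A B t ω ^ 2)) P ∧
    Integrable (fun ω => Fn a n 0 (A B t ω) (M B t ω / A B t ω ^ 2)) P ∧
    ∫ ω, Fn a n (1 / a) (A B t ω) (M B t ω / A B t ω ^ 2) ∂P
      = ∫ ω, Fn a n 0 (A B t ω) (M B t ω / A B t ω ^ 2) ∂P := by
  have hδ : 0 < a / ((n : ℝ) + 2) := by positivity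
  have hδa : a / ((n : ℝ) + 2) < a := by
    rw [div_lt_iff₀ (by positivity)]
    have : (0 : ℝ) ≤ n := n.cast_nonneg
    nlinarith
  refine Ff_const hB t ht (hf (a - a / (n + 2)) (a / (n + 2))) (hf' (a - a / (n + 2)) (a / (n + 2)))
    a (a - a / (n + 2)) (a + 1) (1 / (n + 1)) (by positivity) ha (by linarith) (by linarith)
    (hf_deriv _ _ hδ) ?_ ?_ (hf_zero _ _) (hf'_zero _ _) ?_ ?_
  · unfold hf; fun_prop
  · unfold hf'; fun_prop
  · intro x hx
    rw [abs_of_nonneg (hf_nonneg _ _ _ hδ)]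
    refine (hf_le _ _ _ hδ).trans (max_le ?_ ?_) <;> linarith
  · intro x hx
    have := hf'_abs (a - a / (n + 2)) _ x hδ
    linarith

lemma G_const (hB : IsBrownianMotion P B) (t a : ℝ) (ht : 0 < t) (ha : 0 < a) :
    ∫ ω, Gf a (1 / a) (A B t ω) (M B t ω / A B t ω ^ 2) ∂P
      = ∫ ω, Gf a 0 (A B t ω) (M B t ω / A B t ω ^ 2) ∂P := by
  have mA := meas_A' hB t
  have mM := meas_M hB t
  have lim : ∀ s, (∀ n, Integrable (fun ω => Fn a n s (A B t ω) (M B t ω / A B t ω ^ 2)) P) →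
      Filter.Tendsto (fun n : ℕ => ENNReal.ofReal
        (∫ ω, Fn a n s (A B t ω) (M B t ω / A B t ω ^ 2) ∂P)) Filter.atTop
      (nhds (∫⁻ ω, ENNReal.ofReal (Gf a s (A B t ω) (M B t ω / A B t ω ^ 2)) ∂P)) := by
    intro s hs
    have := lintegral_tendsto_of_tendsto_of_monotone (μ := P)
      (f := fun n ω => ENNReal.ofReal (Fn a n s (A B t ω) (M B t ω / A B t ω ^ 2)))
      (F := fun ω => ENNReal.ofReal (Gf a s (A B t ω) (M B t ω / A B t ω ^ 2)))
      (fun n => (hs n).aestronglyMeasurable.aemeasurable.ennreal_ofReal)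
      (Filter.Eventually.of_forall fun ω n m hnm =>
        ENNReal.ofReal_le_ofReal (Fn_mono a ha _ _ _ hnm))
      (Filter.Eventually.of_forall fun ω =>
        (ENNReal.continuous_ofReal.tendsto _).comp (Fn_tendsto a ha _ _ _))
    refine this.congr fun n => ?_
    rw [ofReal_integral_eq_lintegral_ofReal (hs n)
      (Filter.Eventually.of_forall fun ω => Fn_nonneg a ha _ _ _ _)]
  have l1 := lim (1 / a) fun n => (Fn_const hB t a ht ha n).1
  have l2 := lim 0 fun n => (Fn_const hB t a ht ha n).2.1
  have e := tendsto_nhds_unique l1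
    (l2.congr fun n => by rw [(Fn_const hB t a ht ha n).2.2])
  have conv : ∀ s, ∫ ω, Gf a s (A B t ω) (M B t ω / A B t ω ^ 2) ∂P
      = (∫⁻ ω, ENNReal.ofReal (Gf a s (A B t ω) (M B t ω / A B t ω ^ 2)) ∂P).toReal := by
    intro s
    refine integral_eq_lintegral_of_nonneg_ae (Filter.Eventually.of_forall fun ω =>
      mul_nonneg (le_max_right _ _) (Real.exp_pos _).le) (Measurable.aestronglyMeasurable ?_)
    unfold Gf
    fun_prop
  rw [conv, conv, e]

variable (P B)

theorem expected_max (hB : IsBrownianMotion P B) (t a : ℝ) (ht : 0 < t) (ha : 0 < a) :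
    (∫ ω, max (A B t ω - a) 0 ∂P)
      = t - a + a ^ 2 *
          ∫ ω, (a + A B t ω)⁻¹ *
                Real.exp (2 * M B t ω / (a + A B t ω) - 2 / a) ∂P := by
  have := hB.isProbabilityMeasure
  have hA := A_pos hB t ht
  have iA := integrable_A hB t ht
  have h := G_const hB t a ht ha
  have e1 : ∀ ω, Gf a (1 / a) (A B t ω) (M B t ω / A B t ω ^ 2)
      = a ^ 2 * ((a + A B t ω)⁻¹ * Real.exp (2 * M B t ω / (a + A B t ω) - 2 / a)) := by
    intro ω
    have hp := hA ω
    have hpa : 0 < a + A B t ω := by positivity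
    have e2 : a - A B t ω / (1 + 1 / a * A B t ω) = a ^ 2 * (a + A B t ω)⁻¹ := by
      field_simp
      ring
    rw [Gf, e2, max_eq_left (by positivity), mul_assoc]
    congr 3
    field_simp
    ring
  have e0 : ∀ ω, Gf a 0 (A B t ω) (M B t ω / A B t ω ^ 2) = max (a - A B t ω) 0 := by
    intro ω
    simp [Gf]
  rw [integral_congr_ae (Filter.Eventually.of_forall e1), integral_const_mul,
    integral_congr_ae (Filter.Eventually.of_forall e0)] at h
  rw [h]
  have e3 : ∀ ω, max (A B t ω - a) 0 = (A B t ω - a) + max (a - A B t ω) 0 := by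
    intro ω
    rcases le_total (A B t ω) a with h | h
    · rw [max_eq_right (by linarith), max_eq_left (by linarith)]; ring
    · rw [max_eq_left (by linarith), max_eq_right (by linarith)]; ring
  have i1 : Integrable (fun ω => A B t ω - a) P := iA.sub (integrable_const a)
  have i2 : Integrable (fun ω => max (a - A B t ω) 0) P := ((integrable_const a).sub iA).pos_part
  rw [integral_congr_ae (Filter.Eventually.of_forall e3), integral_add i1 i2,
    integral_sub iA (integrable_const a), integral_A hB t ht]
  simp
end
end
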